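/- arXiv:2007.09504 — 2 statements merged into one kernel-verified Lean document; each statement's English description precedes it below -/
import Mathlib

section
/- Let t⁰ be a solution of the Bethe ansatz equations for the triple (z; μ; V[ν]), ν = M − 2m. Then for every x ∈ ℂ∖{z_1,…,z_n}: D_2(x)·ω(t⁰,z) = (2πi)²·[ −(μ+ν/2)²/4 + Σ_{s=1}^n ( (m_s(m_s+2)/4 + k_s(t⁰,z,μ))/(1 − x/z_s) − (m_s(m_s+2)/4)/(1 − x/z_s)² ) ] · ω(t⁰,z), where k_s(t⁰,z,μ) = (m_s/2)·[(μ − ν/2 + m_s/2) + Σ_{p≠s} m_p·z_s/(z_s − z_p) + 2·Σ_{i=1}^m z_s/(t⁰_i − z_s)]. -/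
open Complex Finset

namespace Paper

noncomputable section

variable {n : ℕ}

/-- The index set of the natural basis of `V = V_{m 0} ⊗ ⋯ ⊗ V_{m (n-1)}`:
the basis vector `v_{i_1} ⊗ ⋯ ⊗ v_{i_n}` corresponds to the index `(i_1,…,i_n)`. -/
abbrev Idx (m : Fin n → ℕ) := ∀ s : Fin n, Fin (m s + 1)

/-- The tensor product `V = V_{m 0} ⊗ ⋯ ⊗ V_{m (n-1)}` realized concretely as the space of
ℂ-valued functions on the index set of its natural basis. -/
abbrev TV (m : Fin n → ℕ) := Idx m → ℂ

/-- The linear operator `f ↦ (i ↦ c i * f (g i))`; all the basic operators below are of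
this form. -/
def mulShift {ι : Type*} (c : ι → ℂ) (g : ι → ι) : Module.End ℂ (ι → ℂ) where
  toFun f i := c i * f (g i)
  map_add' f h := by funext i; simp [mul_add]
  map_smul' a f := by
    funext i
    simp only [Pi.smul_apply, smul_eq_mul, RingHom.id_apply]
    ring

variable (m : Fin n → ℕ)

/-- `e11` acting in the `s`-th tensor factor: `e11 · v_k = ((m-2k)/2) v_k`. -/
def E11 (s : Fin n) : Module.End ℂ (TV m) :=
  mulShift (fun idx => ((m s : ℂ) - 2 * ((idx s : ℕ) : ℂ)) / 2) id

/-- `e22` acting in the `s`-th tensor factor: `e22 · v_k = -((m-2k)/2) v_k`. -/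
def E22 (s : Fin n) : Module.End ℂ (TV m) :=
  mulShift (fun idx => -(((m s : ℂ) - 2 * ((idx s : ℕ) : ℂ)) / 2)) id

/-- `e21` acting in the `s`-th tensor factor: `e21 · v_k = (k+1) v_{k+1}`. -/
def E21 (s : Fin n) : Module.End ℂ (TV m) :=
  mulShift (fun idx => ((idx s : ℕ) : ℂ)) (fun idx => Function.update idx s (idx s - 1))

/-- `e12` acting in the `s`-th tensor factor: `e12 · v_k = (m-k+1) v_{k-1}`. -/
def E12 (s : Fin n) : Module.End ℂ (TV m) :=
  mulShift (fun idx => (m s : ℂ) - ((idx s : ℕ) : ℂ)) (fun idx => Function.update idx s (idx s + 1))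

/-- The diagonal action `e11 = Σ_s e11^{(s)}` on the tensor product. -/
def e11T : Module.End ℂ (TV m) := ∑ s, E11 m s
def e22T : Module.End ℂ (TV m) := ∑ s, E22 m s
def e21T : Module.End ℂ (TV m) := ∑ s, E21 m s
def e12T : Module.End ℂ (TV m) := ∑ s, E12 m s

/-- `v ∈ V[ν]`, i.e. `(e11 - e22) v = ν v`. -/
def inWt (ν : ℤ) (v : TV m) : Prop := (e11T m - e22T m) v = ((ν : ℤ) : ℂ) • v

/-- The Weyl involution `σ`, acting by `σ v_k = (-1)^k v_{m-k}` in each factor. -/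
def sigmaOp : Module.End ℂ (TV m) :=
  mulShift (fun idx => ∏ s, (-1 : ℂ) ^ (m s - (idx s : ℕ))) (fun idx s => (idx s).rev)

/-- The weight of a basis vector: `wt(i) = Σ_s (m_s - 2 i_s)`. -/
def wt (idx : Idx m) : ℤ := ∑ s, ((m s : ℤ) - 2 * ((idx s : ℕ) : ℤ))

/-- The operator `p(κ) = Σ_{k ≥ 0} e21^k e12^k (1/k!) Π_{j=0}^{k-1} (κ + e22 - e11 - j)^{-1}`.
The operator `e22 - e11` is diagonal in the chosen basis with eigenvalue `-wt(idx)` on the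
basis vector labelled by `idx`, so the (partial) inverses `(κ + e22 - e11 - j)^{-1}` are the
diagonal operators with entries `(κ - wt(idx) - j)⁻¹`.  The sum is finite on `V` since
`e12` is nilpotent:  `e12^k = 0` for `k > M = Σ_s m_s`. -/
def pOp (κ : ℂ) : Module.End ℂ (TV m) :=
  ∑ k ∈ Finset.range ((∑ s, m s) + 1),
    (e21T m) ^ k * (e12T m) ^ k *
      mulShift (fun idx => ((k.factorial : ℂ))⁻¹ *
        ∏ j ∈ Finset.range k, (κ - ((wt m idx : ℤ) : ℂ) - (j : ℂ))⁻¹) id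

/-- The operator `𝒜(κ) = σ ∘ p(κ)`. -/
def Aop (κ : ℂ) : Module.End ℂ (TV m) := sigmaOp m * pOp m κ

/-- `Ω₀^{(s,t)} = e11^{(s)} e11^{(t)} + e22^{(s)} e22^{(t)}`. -/
def Om0 (s t : Fin n) : Module.End ℂ (TV m) := E11 m s * E11 m t + E22 m s * E22 m t

/-- `Ω₁₂^{(s,t)} = e12^{(s)} e21^{(t)}`. -/
def Om12 (s t : Fin n) : Module.End ℂ (TV m) := E12 m s * E21 m t

/-- `Ω₂₁^{(s,t)} = e21^{(s)} e12^{(t)}`. -/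
def Om21 (s t : Fin n) : Module.End ℂ (TV m) := E21 m s * E12 m t

/-- The trigonometric r-matrix `r^{(s,t)}(x) = (Ω₊ x + Ω₋)/(x-1)` acting in the `s`-th and
`t`-th tensor factors, where `Ω₊ = ½Ω₀ + Ω₁₂` and `Ω₋ = ½Ω₀ + Ω₂₁`. -/
def rOp (s t : Fin n) (x : ℂ) : Module.End ℂ (TV m) :=
  (x - 1)⁻¹ • (x • ((2 : ℂ)⁻¹ • Om0 m s t + Om12 m s t) + ((2 : ℂ)⁻¹ • Om0 m s t + Om21 m s t))

/-- The trigonometric Gaudin operators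
`K_s(z,μ) = (μ/2)(e11-e22)^{(s)} + Σ_{t ≠ s} r^{(s,t)}(z_s/z_t)`. -/
def Kop (z : Fin n → ℂ) (μ : ℂ) (s : Fin n) : Module.End ℂ (TV m) :=
  (μ / 2) • (E11 m s - E22 m s) + ∑ t ∈ Finset.univ.erase s, rOp m s t (z s / z t)

/-- The matrix entry `M₁₁(x) = 2πi Σ_s (1-x/z_s)⁻¹ e11^{(s)} - πi e11`. -/
def M11 (z : Fin n → ℂ) (x : ℂ) : Module.End ℂ (TV m) :=
  (2 * (Real.pi : ℂ) * I) • (∑ s, (1 - x / z s)⁻¹ • E11 m s) - ((Real.pi : ℂ) * I) • e11T m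

/-- `M₁₂(x) = 2πi Σ_s (1-x/z_s)⁻¹ e21^{(s)} - 2πi e21`. -/
def M12 (z : Fin n → ℂ) (x : ℂ) : Module.End ℂ (TV m) :=
  (2 * (Real.pi : ℂ) * I) • (∑ s, (1 - x / z s)⁻¹ • E21 m s) -
    (2 * (Real.pi : ℂ) * I) • e21T m

/-- `M₂₁(x) = 2πi Σ_s (1-x/z_s)⁻¹ e12^{(s)}`. -/
def M21 (z : Fin n → ℂ) (x : ℂ) : Module.End ℂ (TV m) :=
  (2 * (Real.pi : ℂ) * I) • (∑ s, (1 - x / z s)⁻¹ • E12 m s)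

/-- `M₂₂(x) = 2πi Σ_s (1-x/z_s)⁻¹ e22^{(s)} - πi e22`. -/
def M22 (z : Fin n → ℂ) (x : ℂ) : Module.End ℂ (TV m) :=
  (2 * (Real.pi : ℂ) * I) • (∑ s, (1 - x / z s)⁻¹ • E22 m s) - ((Real.pi : ℂ) * I) • e22T m

/-- The derivative `(dM₂₂/dx)(x) = 2πi Σ_s z_s⁻¹ (1-x/z_s)⁻² e22^{(s)}`. -/
def M22d (z : Fin n → ℂ) (x : ℂ) : Module.End ℂ (TV m) :=
  (2 * (Real.pi : ℂ) * I) • (∑ s, ((z s)⁻¹ * ((1 - x / z s)⁻¹) ^ 2) • E22 m s)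

/-- The coefficient `D₂(x)` of the universal differential operator
`𝒟 = cdet [[∂_u - πiμ + M₁₁, M₁₂],[M₂₁, ∂_u + πiμ + M₂₂]] = ∂_u² + D₁(x) ∂_u + D₂(x)`
(where `x = e^{-2πiu}`, `∂_u = -2πi x ∂_x`), namely
`D₂(x) = (-πiμ + M₁₁(x)) ∘ (πiμ + M₂₂(x)) - 2πi x (dM₂₂/dx)(x) - M₂₁(x) ∘ M₁₂(x)`. -/
def D2 (z : Fin n → ℂ) (μ : ℂ) (x : ℂ) : Module.End ℂ (TV m) :=
  (-(((Real.pi : ℂ) * I * μ)) • (1 : Module.End ℂ (TV m)) + M11 m z x) *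
      ((((Real.pi : ℂ) * I * μ)) • (1 : Module.End ℂ (TV m)) + M22 m z x)
    - (2 * (Real.pi : ℂ) * I * x) • M22d m z x
    - M21 m z x * M12 m z x

/-- The Bethe ansatz equations for the triple `(z; μ; V[ν])`, `ν = M - 2m'`:  `t` is a tuple
of pairwise distinct complex numbers, each nonzero and distinct from every `z_s`, with
`(1 - μ + ν/2)/t_i + Σ_{j≠i} 2/(t_i - t_j) - Σ_s m_s/(t_i - z_s) = 0` for all `i`. -/
def BAE (z : Fin n → ℂ) (μ : ℂ) {m' : ℕ} (t : Fin m' → ℂ) : Prop :=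
  Function.Injective t ∧ (∀ i, t i ≠ 0) ∧ (∀ i s, t i ≠ z s) ∧
    ∀ i, (1 - μ + ((∑ s, (m s : ℂ)) - 2 * (m' : ℂ)) / 2) / t i
        + (∑ j ∈ Finset.univ.erase i, 2 / (t i - t j))
        - ∑ s, (m s : ℂ) / (t i - z s) = 0

/-- The partial sum `ℓ_1 + ⋯ + ℓ_{s-1}` (0-based). -/
def pref (ℓv : Idx m) (s : Fin n) : ℕ :=
  ∑ u ∈ Finset.univ.filter (fun u => u < s), (ℓv u : ℕ)

/-- Extension of a tuple `t : Fin m' → ℂ` to a function on `ℕ` (by zero). -/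
def extt {m' : ℕ} (t : Fin m' → ℂ) : ℕ → ℂ := fun i => if h : i < m' then t ⟨i, h⟩ else 0

/-- The coordinate `ω_ℓ(t,z) = Σ_{ρ ∈ S_{m'}} Π_{s=1}^n Π_{i=ℓ_1+⋯+ℓ_{s-1}+1}^{ℓ_1+⋯+ℓ_s}
(t_{ρ(i)} - z_s)⁻¹` of the weight function. -/
def omegaCoeff (z : Fin n → ℂ) {m' : ℕ} (t : Fin m' → ℂ) (ℓv : Idx m) : ℂ :=
  ∑ ρ : Equiv.Perm (Fin m'), ∏ s : Fin n,
    ∏ i ∈ Finset.Ico (pref m ℓv s) (pref m ℓv s + (ℓv s : ℕ)), (extt (t ∘ ρ) i - z s)⁻¹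

/-- The Bethe vector (weight function) `ω(t,z) = Σ_{ℓ ∈ C} ω_ℓ(t,z) v_ℓ ∈ V[M - 2m']`. -/
def betheVec (z : Fin n → ℂ) {m' : ℕ} (t : Fin m' → ℂ) : TV m :=
  fun ℓv => if (∑ s, ((ℓv s : ℕ))) = m' then omegaCoeff m z t ℓv else 0

/-- The eigenvalue `k_s(t,z,μ) = (m_s/2)[(μ - ν/2 + m_s/2) + Σ_{p≠s} m_p z_s/(z_s-z_p)
+ 2 Σ_i z_s/(t_i - z_s)]`, with `ν = M - 2m'`. -/
def kEig (z : Fin n → ℂ) (μ : ℂ) {m' : ℕ} (t : Fin m' → ℂ) (s : Fin n) : ℂ :=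
  ((m s : ℂ) / 2) * ((μ - ((∑ u, (m u : ℂ)) - 2 * (m' : ℂ)) / 2 + (m s : ℂ) / 2)
    + (∑ p ∈ Finset.univ.erase s, (m p : ℂ) * z s / (z s - z p))
    + 2 * ∑ i, z s / (t i - z s))

/-- The scalar eigenvalue function `E₂(x, t, z, μ)` of `D₂(x)` on the Bethe vector, i.e.
the coefficient of the fundamental differential operator `ℰ = ∂_u² + E₂(x)`. -/
def E2fun (z : Fin n → ℂ) (μ : ℂ) {m' : ℕ} (t : Fin m' → ℂ) (x : ℂ) : ℂ :=
  (2 * (Real.pi : ℂ) * I) ^ 2 *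
    (-(μ + ((∑ u, (m u : ℂ)) - 2 * (m' : ℂ)) / 2) ^ 2 / 4
      + ∑ s, (((m s : ℂ) * ((m s : ℂ) + 2) / 4 + kEig m z μ t s) / (1 - x / z s)
          - ((m s : ℂ) * ((m s : ℂ) + 2) / 4) / (1 - x / z s) ^ 2))

/-!
At the function `a = z / (z - x)` on the set of sites, the entries of the matrix `M(x)` are the
currents `h (a - 1/2)`, `f (a - 1)` and `e a` of `sl₂ ⊗ ℂⁿ`, and the Bethe vector is `∏ i, f (c i)`
applied to the highest weight vector, where `c i = 1 / (t i - z)`. By partial fractions `a * c i`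
is a combination of `c i` and `a - 1`. Commuting `D₂(x)` past the product therefore gives a multiple
of the Bethe vector and unwanted terms, in which one factor `f (c i)` is replaced by `f (a - 1)`.

Let `G` be the field of charges `m_s / 2` at `z_s` and `-1` at `t_i`. The Bethe equations say that
`2 G(t_i) = μ + ν / 2 + 1` for all `i`, which is exactly the vanishing of the unwanted terms. Up to
elementary terms the eigenvalue is the square of `G(x) - (μ + ν / 2) / 2`; a partial fraction
expansion of `G(x)²` produces the residues `G(z_s)`, which are the `k_s` in disguise. The points
`x = t_i`, where `c i` and `a - 1` are proportional, are reached by continuity.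
-/

section Algebra

variable (R A V : Type*) [CommRing R] [CommRing A] [Algebra R A] [AddCommGroup V] [Module R V]

/-- Currents of `sl₂ ⊗ A` acting on `V`, where `h` is half the coroot. Only the relations that
involve `f` are imposed: these are the ones that move `e` and `h` past `f` to a highest weight
vector. -/
structure Sl2CurrentRep where
  e : A →ₗ[R] Module.End R V
  f : A →ₗ[R] Module.End R V
  h : A →ₗ[R] Module.End R V
  commute_f (a b : A) : Commute (f a) (f b)
  h_mul_f (a b : A) : h a * f b = f b * h a - f (a * b)
  e_mul_f (a b : A) : e a * f b = f b * e a + 2 • h (a * b)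

variable {R A V} {σ ι : Type*}

/-- Partial fraction expansions of the products `a * c i` and `a * c i * c j`, the simple fractions
being the `c i` and `a - 1`. The motivating case is `a = z / (z - x)`, `c i = 1 / (t i - z)` as
functions of `z`, where `a - 1 = x / (z - x)`. -/
structure IsPartialFraction (a : A) (c : ι → A) (u r : ι → R) (α : ι → ι → R) : Prop where
  mul_eq (i : ι) : a * c i = u i • c i + r i • (a - 1)
  mul_mul_eq {i j : ι} (hij : i ≠ j) :
    a * c i * c j = α i j • c i + α j i • c j + (r i * r j) • (a - 1)

namespace Sl2CurrentRep

/-- The currents `e(a) = ∑ s, a s • E s`, and so on, for `A = R ^ σ` acting through `σ` copies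
of `sl₂`, one at each site. -/
def ofSites [Fintype σ] [DecidableEq σ] (E F H : σ → Module.End R V)
    (commute_F : ∀ s u, Commute (F s) (F u))
    (H_mul_F : ∀ s u, H s * F u = F u * H s - if s = u then F u else 0)
    (E_mul_F : ∀ s u, E s * F u = F u * E s + if s = u then 2 • H u else 0) :
    Sl2CurrentRep R (σ → R) V where
  e := Fintype.linearCombination R E
  f := Fintype.linearCombination R F
  h := Fintype.linearCombination R H
  commute_f a b := by
    simp only [Fintype.linearCombination_apply]
    exact .sum_left _ _ _ fun s _ => .sum_right _ _ _ fun u _ =>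
      ((commute_F s u).smul_left _).smul_right _
  h_mul_f a b := by
    simp only [Fintype.linearCombination_apply, sum_mul_sum]
    rw [sum_comm (f := fun u s => b u • F u * a s • H s), ← sum_sub_distrib]
    refine sum_congr rfl fun s _ => ?_
    simp [H_mul_F, smul_sub, smul_smul, mul_comm (a s), sum_sub_distrib]
  e_mul_f a b := by
    simp only [Fintype.linearCombination_apply, sum_mul_sum]
    rw [sum_comm (f := fun u s => b u • F u * a s • E s), smul_sum, ← sum_add_distrib]
    refine sum_congr rfl fun s _ => ?_
    simp [E_mul_F, smul_add, smul_smul, mul_comm (a s), sum_add_distrib, smul_comm (2 : ℕ),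
      -nsmul_eq_mul]

variable (ρ : Sl2CurrentRep R A V)

lemma h_f_apply (a b : A) (v : V) : ρ.h a (ρ.f b v) = ρ.f b (ρ.h a v) - ρ.f (a * b) v :=
  congr($(ρ.h_mul_f a b) v)

lemma e_f_apply (a b : A) (v : V) :
    ρ.e a (ρ.f b v) = ρ.f b (ρ.e a v) + (2 : R) • ρ.h (a * b) v := by
  simpa [two_smul] using congr($(ρ.e_mul_f a b) v)

/-- `v` is a highest weight vector of weight `Λ`. -/
structure IsHighestWeight (Λ : A →ₗ[R] R) (v : V) : Prop where
  e_apply (a : A) : ρ.e a v = 0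
  h_apply (a : A) : ρ.h a v = Λ a • v

lemma IsHighestWeight.ofSites [Fintype σ] [DecidableEq σ] {E F H : σ → Module.End R V}
    (commute_F : ∀ s u, Commute (F s) (F u))
    (H_mul_F : ∀ s u, H s * F u = F u * H s - if s = u then F u else 0)
    (E_mul_F : ∀ s u, E s * F u = F u * E s + if s = u then 2 • H u else 0)
    {w : σ → R} {v : V} (hE : ∀ s, E s v = 0) (hH : ∀ s, H s v = w s • v) :
    (ofSites E F H commute_F H_mul_F E_mul_F).IsHighestWeight
      (Fintype.linearCombination R w) v where
  e_apply a := by simp [Sl2CurrentRep.ofSites, Fintype.linearCombination_apply, hE]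
  h_apply a := by simp [Sl2CurrentRep.ofSites, Fintype.linearCombination_apply, hH, smul_smul,
    sum_smul]

/-- The vector `(∏ i ∈ S, f (c i)) v`. -/
def state (c : ι → A) (S : Finset ι) (v : V) : V :=
  S.noncommProd (fun i => ρ.f (c i)) (fun _ _ _ _ _ => ρ.commute_f _ _) v

@[simp]
lemma state_empty (c : ι → A) (v : V) : ρ.state c ∅ v = v :=
  congr($(noncommProd_empty (fun i => ρ.f (c i)) _) v)

variable [DecidableEq ι] {Λ : A →ₗ[R] R} {v : V} {c : ι → A} {S : Finset ι}

lemma state_insert {i : ι} (hi : i ∉ S) :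
    ρ.state c (insert i S) v = ρ.f (c i) (ρ.state c S v) :=
  congr($(noncommProd_insert_of_notMem S i (fun i => ρ.f (c i)) _ hi) v)

lemma f_state_erase {i : ι} (hi : i ∈ S) :
    ρ.f (c i) (ρ.state c (S.erase i) v) = ρ.state c S v := by
  rw [← state_insert _ (notMem_erase i S), insert_erase hi]

variable {ρ}

lemma IsHighestWeight.h_state (hv : ρ.IsHighestWeight Λ v) (a : A) (c : ι → A) (S : Finset ι) :
    ρ.h a (ρ.state c S v) =
      Λ a • ρ.state c S v - ∑ i ∈ S, ρ.f (a * c i) (ρ.state c (S.erase i) v) := by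
  induction S using Finset.induction with
  | empty => simp [hv.h_apply]
  | insert i S hi ih =>
    have hsum : ∑ j ∈ S, ρ.f (a * c j) (ρ.state c ((insert i S).erase j) v) =
        ρ.f (c i) (∑ j ∈ S, ρ.f (a * c j) (ρ.state c (S.erase j) v)) := by
      rw [map_sum]
      refine sum_congr rfl fun j hj => ?_
      rw [erase_insert_of_ne (ne_of_mem_of_not_mem hj hi).symm,
        state_insert _ (mt mem_of_mem_erase hi)]
      exact congr($((ρ.commute_f (a * c j) (c i)).eq) _)
    rw [sum_insert hi, erase_insert hi, hsum, state_insert _ hi, h_f_apply, ih, map_sub, map_smul]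
    abel

lemma IsHighestWeight.e_state (hv : ρ.IsHighestWeight Λ v) (a : A) (c : ι → A) (S : Finset ι) :
    ρ.e a (ρ.state c S v) = ∑ i ∈ S, (2 * Λ (a * c i)) • ρ.state c (S.erase i) v -
      ∑ i ∈ S, ∑ j ∈ S.erase i, ρ.f (a * c i * c j) (ρ.state c ((S.erase i).erase j) v) := by
  induction S using Finset.induction with
  | empty => simp [hv.e_apply]
  | insert i S hi ih =>
    have hne {j : ι} (hj : j ∈ S) : i ≠ j := (ne_of_mem_of_not_mem hj hi).symm
    have hsum : ∑ j ∈ S, (2 * Λ (a * c j)) • ρ.state c ((insert i S).erase j) v =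
        ρ.f (c i) (∑ j ∈ S, (2 * Λ (a * c j)) • ρ.state c (S.erase j) v) := by
      rw [map_sum]
      refine sum_congr rfl fun j hj => ?_
      rw [erase_insert_of_ne (hne hj), state_insert _ (mt mem_of_mem_erase hi), map_smul]
    have hsum₂ : ∑ j ∈ S, ∑ k ∈ (insert i S).erase j,
          ρ.f (a * c j * c k) (ρ.state c (((insert i S).erase j).erase k) v) =
        ∑ j ∈ S, ρ.f (a * c i * c j) (ρ.state c (S.erase j) v) +
        ρ.f (c i) (∑ j ∈ S, ∑ k ∈ S.erase j,
          ρ.f (a * c j * c k) (ρ.state c ((S.erase j).erase k) v)) := by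
      rw [map_sum, ← sum_add_distrib]
      refine sum_congr rfl fun j hj => ?_
      have hij : i ∉ S.erase j := mt mem_of_mem_erase hi
      rw [erase_insert_of_ne (hne hj), sum_insert hij, erase_insert hij, mul_right_comm, map_sum]
      congr 1
      refine sum_congr rfl fun k hk => ?_
      rw [erase_insert_of_ne (hne (mem_of_mem_erase hk)),
        state_insert _ (mt mem_of_mem_erase hij)]
      exact congr($((ρ.commute_f (a * c j * c k) (c i)).eq) _)
    rw [sum_insert hi, sum_insert hi, erase_insert hi, hsum, hsum₂, state_insert _ hi, e_f_apply,
      ih, hv.h_state, map_sub, smul_sub, smul_smul]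
    module

section Gaudin

variable {a : A} {u r : ι → R} {α : ι → ι → R}

lemma IsHighestWeight.e_state_of_isPartialFraction (hv : ρ.IsHighestWeight Λ v)
    (hc : IsPartialFraction a c u r α) (S : Finset ι) :
    ρ.e a (ρ.state c S v) =
      ∑ i ∈ S, (2 * (Λ (a * c i) - ∑ j ∈ S.erase i, α j i)) • ρ.state c (S.erase i) v -
      ∑ i ∈ S, ∑ j ∈ S.erase i,
        (r i * r j) • ρ.f (a - 1) (ρ.state c ((S.erase i).erase j) v) := by
  have hpair {i j : ι} (hi : i ∈ S) (hj : j ∈ S.erase i) :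
      ρ.f (a * c i * c j) (ρ.state c ((S.erase i).erase j) v) =
        α i j • ρ.state c (S.erase j) v + α j i • ρ.state c (S.erase i) v +
          (r i * r j) • ρ.f (a - 1) (ρ.state c ((S.erase i).erase j) v) := by
    have hij := ne_of_mem_erase hj
    have hi' : i ∈ S.erase j := mem_erase.2 ⟨hij.symm, hi⟩
    simp only [hc.mul_mul_eq hij.symm, map_add, map_smul, LinearMap.add_apply,
      LinearMap.smul_apply, f_state_erase ρ hj]
    rw [erase_right_comm, f_state_erase ρ hi']
  have hswap : ∑ i ∈ S, ∑ j ∈ S.erase i, α i j • ρ.state c (S.erase j) v =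
      ∑ i ∈ S, ∑ j ∈ S.erase i, α j i • ρ.state c (S.erase i) v :=
    sum_comm' fun i j => by simp only [mem_erase]; tauto
  rw [hv.e_state, sum_congr rfl fun i hi => sum_congr rfl fun j hj => hpair hi hj]
  simp only [sum_add_distrib, hswap, ← sum_smul, mul_sub, sub_smul, sum_sub_distrib, two_mul,
    add_smul]
  abel

variable [Invertible (2 : R)]

variable (ρ) in
/-- The diagonal current at `a`, shifted by the twist `k`. -/
def cartan (k : R) (a : A) : Module.End R V :=
  ρ.h (a - (⅟2 : R) • 1) - k • 1

variable (ρ) in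
/-- The trigonometric Gaudin transfer matrix evaluated at the function `a`. -/
def transfer (k : R) (a : A) : Module.End R V :=
  ρ.cartan k a ^ 2 + ρ.h (a ^ 2 - a) + ρ.f (a - 1) * ρ.e a

lemma cartan_f_apply (k : R) (a b : A) (w : V) :
    ρ.cartan k a (ρ.f b w) = ρ.f b (ρ.cartan k a w) - ρ.f ((a - (⅟2 : R) • 1) * b) w := by
  simp only [cartan, LinearMap.sub_apply, LinearMap.smul_apply, Module.End.one_apply, h_f_apply,
    map_sub (ρ.f b), map_smul (ρ.f b)]
  abel

/-- The diagonal matrix element of `cartan k a` on `state c S v`. -/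
def cartanWeight (Λ : A →ₗ[R] R) (k : R) (a : A) (u : ι → R) (S : Finset ι) : R :=
  Λ (a - (⅟2 : R) • 1) - k - ∑ i ∈ S, (u i - ⅟2)

lemma cartanWeight_erase {k : R} {i : ι} (hi : i ∈ S) :
    cartanWeight Λ k a u (S.erase i) = cartanWeight Λ k a u S + (u i - ⅟2) := by
  rw [cartanWeight, cartanWeight, ← add_sum_erase _ _ hi]
  ring

variable (hv : ρ.IsHighestWeight Λ v) (hc : IsPartialFraction a c u r α) (k : R) (S : Finset ι)
include hv hc

lemma IsHighestWeight.cartan_state :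
    ρ.cartan k a (ρ.state c S v) = cartanWeight Λ k a u S • ρ.state c S v -
      ∑ i ∈ S, r i • ρ.f (a - 1) (ρ.state c (S.erase i) v) := by
  have hterm {i : ι} (hi : i ∈ S) :
      ρ.f ((a - (⅟2 : R) • 1) * c i) (ρ.state c (S.erase i) v) =
        (u i - ⅟2) • ρ.state c S v + r i • ρ.f (a - 1) (ρ.state c (S.erase i) v) := by
    rw [sub_mul, hc.mul_eq, smul_one_mul, ← f_state_erase ρ hi]
    simp only [map_add, map_sub, map_smul, LinearMap.add_apply, LinearMap.sub_apply,
      LinearMap.smul_apply]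
    module
  rw [cartan, LinearMap.sub_apply, hv.h_state, sum_congr rfl fun i hi => hterm hi,
    sum_add_distrib, ← sum_smul, cartanWeight]
  simp only [LinearMap.smul_apply, Module.End.one_apply]
  module

lemma IsHighestWeight.cartan_sq_state :
    (ρ.cartan k a ^ 2) (ρ.state c S v) = cartanWeight Λ k a u S ^ 2 • ρ.state c S v -
      ∑ i ∈ S, (r i * (cartanWeight Λ k a u S + cartanWeight Λ k a u (S.erase i))) •
        ρ.f (a - 1) (ρ.state c (S.erase i) v) +
      ∑ i ∈ S, r i • ρ.f ((a - (⅟2 : R) • 1) * (a - 1)) (ρ.state c (S.erase i) v) +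
      ∑ i ∈ S, ∑ j ∈ S.erase i,
        (r i * r j) • ρ.f (a - 1) (ρ.f (a - 1) (ρ.state c ((S.erase i).erase j) v)) := by
  rw [sq, Module.End.mul_apply, hv.cartan_state hc, map_sub, map_smul, hv.cartan_state hc]
  simp only [map_sum, map_smul, cartan_f_apply, hv.cartan_state hc, map_sub (ρ.f (a - 1)),
    smul_sub, smul_sum, sum_sub_distrib, mul_add, add_smul, sum_add_distrib, smul_smul,
    mul_comm (r _) (cartanWeight _ _ _ _ S), sq]
  abel

lemma IsHighestWeight.h_sq_sub_self_state :
    ρ.h (a ^ 2 - a) (ρ.state c S v) =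
      (Λ (a ^ 2 - a) - ∑ i ∈ S, (u i ^ 2 - u i)) • ρ.state c S v -
      ∑ i ∈ S, r i • ρ.f ((a - (⅟2 : R) • 1) * (a - 1)) (ρ.state c (S.erase i) v) -
      ∑ i ∈ S, (r i * (u i - ⅟2)) • ρ.f (a - 1) (ρ.state c (S.erase i) v) := by
  have hmul (i : ι) : (a ^ 2 - a) * c i = (u i ^ 2 - u i) • c i +
      r i • ((a - (⅟2 : R) • 1) * (a - 1)) + (r i * (u i - ⅟2)) • (a - 1) := by
    have hhalf : algebraMap R A ⅟2 * 2 = 1 := by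
      rw [← map_ofNat (algebraMap R A) 2, ← map_mul, invOf_mul_self, map_one]
    have h := hc.mul_eq i
    simp only [Algebra.smul_def, map_sub, map_mul, map_pow] at h ⊢
    linear_combination (a + algebraMap R A (u i) - 1) * h +
      algebraMap R A (r i) * (a - 1) * hhalf
  have hterm {i : ι} (hi : i ∈ S) :
      ρ.f ((a ^ 2 - a) * c i) (ρ.state c (S.erase i) v) = (u i ^ 2 - u i) • ρ.state c S v +
        r i • ρ.f ((a - (⅟2 : R) • 1) * (a - 1)) (ρ.state c (S.erase i) v) +
        (r i * (u i - ⅟2)) • ρ.f (a - 1) (ρ.state c (S.erase i) v) := by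
    rw [hmul, ← f_state_erase ρ hi]
    simp only [map_add, map_smul, LinearMap.add_apply, LinearMap.smul_apply]
  rw [hv.h_state, sum_congr rfl fun i hi => hterm hi, sum_add_distrib, sum_add_distrib,
    ← sum_smul]
  module

theorem IsHighestWeight.transfer_state :
    ρ.transfer k a (ρ.state c S v) =
      (cartanWeight Λ k a u S ^ 2 + Λ (a ^ 2 - a) - ∑ i ∈ S, (u i ^ 2 - u i)) • ρ.state c S v +
      ∑ i ∈ S, (2 * (Λ (a * c i) - ∑ j ∈ S.erase i, α j i -
        r i * cartanWeight Λ k a u (S.erase i))) • ρ.f (a - 1) (ρ.state c (S.erase i) v) := by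
  have hunwanted : ∑ i ∈ S, (2 * (Λ (a * c i) - ∑ j ∈ S.erase i, α j i -
        r i * cartanWeight Λ k a u (S.erase i))) • ρ.f (a - 1) (ρ.state c (S.erase i) v) =
      ∑ i ∈ S, (2 * (Λ (a * c i) - ∑ j ∈ S.erase i, α j i)) •
        ρ.f (a - 1) (ρ.state c (S.erase i) v) -
      ∑ i ∈ S, (r i * (cartanWeight Λ k a u S + cartanWeight Λ k a u (S.erase i))) •
        ρ.f (a - 1) (ρ.state c (S.erase i) v) -
      ∑ i ∈ S, (r i * (u i - ⅟2)) • ρ.f (a - 1) (ρ.state c (S.erase i) v) := by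
    rw [← sum_sub_distrib, ← sum_sub_distrib]
    refine sum_congr rfl fun i hi => ?_
    rw [cartanWeight_erase hi]
    module
  rw [hunwanted, transfer, LinearMap.add_apply, LinearMap.add_apply, Module.End.mul_apply,
    hv.cartan_sq_state hc, hv.h_sq_sub_self_state hc, hv.e_state_of_isPartialFraction hc]
  simp only [map_sub (ρ.f (a - 1)), map_sum (ρ.f (a - 1)), map_smul (ρ.f (a - 1))]
  module

theorem IsHighestWeight.transfer_state_of_bethe
    (hbethe : ∀ i ∈ S, Λ (a * c i) - ∑ j ∈ S.erase i, α j i =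
      r i * cartanWeight Λ k a u (S.erase i)) :
    ρ.transfer k a (ρ.state c S v) =
      (cartanWeight Λ k a u S ^ 2 + Λ (a ^ 2 - a) - ∑ i ∈ S, (u i ^ 2 - u i)) •
        ρ.state c S v := by
  rw [hv.transfer_state hc, add_eq_left]
  exact sum_eq_zero fun i hi => by rw [hbethe i hi, sub_self, mul_zero, zero_smul]

end Gaudin

end Sl2CurrentRep

end Algebra

section Scalars

variable {𝕜 : Type*} [Field 𝕜]

/-- The fraction `(1 - x / y)⁻¹` with its pole at `x = y`. There it has the junk value `0`, so that
`∑ k, w k * poleFraction (y k) (y i)` omits the singular term `k = i`. -/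
def poleFraction (y x : 𝕜) : 𝕜 := y / (y - x)

@[simp]
lemma poleFraction_self (y : 𝕜) : poleFraction y y = 0 := by simp [poleFraction]

lemma inv_one_sub_div_eq_poleFraction {y : 𝕜} (hy : y ≠ 0) (x : 𝕜) :
    (1 - x / y)⁻¹ = poleFraction y x := by
  rw [one_sub_div hy, inv_div, poleFraction]

lemma poleFraction_eq_one_sub {x y : 𝕜} (h : x ≠ y) : poleFraction y x = 1 - x / (x - y) := by
  have := sub_ne_zero.2 h
  have := sub_ne_zero.2 h.symm
  rw [poleFraction]
  field_simp
  ring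

lemma poleFraction_mul {x y y' : 𝕜} (hx : x ≠ y) (hx' : x ≠ y') (h : y ≠ y') :
    poleFraction y x * poleFraction y' x =
      poleFraction y x * poleFraction y' y + poleFraction y' x * poleFraction y y' := by
  have := sub_ne_zero.2 hx.symm
  have := sub_ne_zero.2 hx'.symm
  have := sub_ne_zero.2 h
  have := sub_ne_zero.2 h.symm
  simp only [poleFraction]
  field_simp
  ring

lemma poleFraction_mul_inv_sub {x y t : 𝕜} (hx : x ≠ y) (ht : t ≠ y) (hxt : x ≠ t) :
    poleFraction y x * (t - y)⁻¹ = (t - x)⁻¹ * (poleFraction y x - poleFraction y t) := by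
  have := sub_ne_zero.2 hx.symm
  have := sub_ne_zero.2 ht
  have := sub_ne_zero.2 ht.symm
  have := sub_ne_zero.2 hxt.symm
  simp only [poleFraction]
  field_simp
  ring

lemma isPartialFraction_poleFraction {σ ι : Type*} {z : σ → 𝕜} {t : ι → 𝕜} {x : 𝕜}
    (ht : t.Injective) (hxz : ∀ s, x ≠ z s) (hxt : ∀ i, x ≠ t i) (htz : ∀ i s, t i ≠ z s) :
    IsPartialFraction (fun s => poleFraction (z s) x) (fun i s => (t i - z s)⁻¹)
      (fun i => poleFraction (t i) x) (fun i => (t i - x)⁻¹)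
      (fun i j => poleFraction (t i) x * (t j - t i)⁻¹) where
  mul_eq i := by
    ext s
    have := sub_ne_zero.2 (hxz s).symm
    have := sub_ne_zero.2 (hxt i).symm
    have := sub_ne_zero.2 (htz i s)
    simp only [Pi.mul_apply, Pi.add_apply, Pi.sub_apply, Pi.smul_apply, Pi.one_apply, smul_eq_mul,
      poleFraction]
    field_simp
    ring
  mul_mul_eq {i j} hij := by
    ext s
    have := sub_ne_zero.2 (hxz s).symm
    have := sub_ne_zero.2 (hxt i).symm
    have := sub_ne_zero.2 (hxt j).symm
    have := sub_ne_zero.2 (htz i s)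
    have := sub_ne_zero.2 (htz j s)
    have := sub_ne_zero.2 (ht.ne hij)
    have := sub_ne_zero.2 (ht.ne hij).symm
    simp only [Pi.mul_apply, Pi.add_apply, Pi.sub_apply, Pi.smul_apply, Pi.one_apply, smul_eq_mul,
      poleFraction]
    field_simp
    ring

variable {ι : Type*} [Fintype ι]

/-- The field at `x` of charges `w k` placed at the points `y k`. At `x = y i` the contribution of
the charge `w i` itself is dropped, see `poleFraction`. -/
def chargeField (w y : ι → 𝕜) (x : 𝕜) : 𝕜 := ∑ k, w k * poleFraction (y k) x

lemma chargeField_eq_of_forall_ne (w : ι → 𝕜) {y : ι → 𝕜} {x : 𝕜} (hx : ∀ k, x ≠ y k) :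
    chargeField w y x = ∑ k, w k - x * ∑ k, w k / (x - y k) := by
  rw [chargeField, mul_sum, ← sum_sub_distrib]
  refine sum_congr rfl fun k _ => ?_
  rw [poleFraction_eq_one_sub (hx k)]
  ring

lemma chargeField_self [DecidableEq ι] (w : ι → 𝕜) {y : ι → 𝕜} (hy : y.Injective) (i : ι) :
    chargeField w y (y i) =
      ∑ k ∈ univ.erase i, w k - y i * ∑ k ∈ univ.erase i, w k / (y i - y k) := by
  rw [chargeField, ← sum_erase univ (a := i) (by simp), mul_sum, ← sum_sub_distrib]
  refine sum_congr rfl fun k hk => ?_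
  rw [poleFraction_eq_one_sub (hy.ne (ne_of_mem_erase hk).symm)]
  ring

lemma chargeField_sumElim {κ : Type*} [Fintype κ] (w y : ι → 𝕜) (w' y' : κ → 𝕜) (x : 𝕜) :
    chargeField (Sum.elim w w') (Sum.elim y y') x = chargeField w y x + chargeField w' y' x :=
  Fintype.sum_sum_type _

lemma sum_mul_poleFraction_mul_inv_sub (w : ι → 𝕜) {y : ι → 𝕜} (hy : y.Injective) {x : 𝕜}
    (hx : ∀ k, x ≠ y k) (i : ι) :
    ∑ k, w k * (poleFraction (y k) x * (y i - y k)⁻¹) =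
      (y i - x)⁻¹ * (chargeField w y x - w i * poleFraction (y i) x - chargeField w y (y i)) := by
  classical
  rw [chargeField, chargeField, ← add_sum_erase _ _ (mem_univ i),
    ← add_sum_erase _ (fun k => w k * poleFraction (y k) x) (mem_univ i), add_sub_cancel_left,
    ← add_sum_erase _ (fun k => w k * poleFraction (y k) (y i)) (mem_univ i), poleFraction_self,
    mul_zero, zero_add, sub_self, inv_zero, mul_zero, mul_zero, zero_add, ← sum_sub_distrib,
    mul_sum]
  refine sum_congr rfl fun k hk => ?_
  rw [poleFraction_mul_inv_sub (hx k) (hy.ne (ne_of_mem_erase hk).symm) (hx i)]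
  ring

lemma chargeField_sq (w : ι → 𝕜) {y : ι → 𝕜} (hy : y.Injective) {x : 𝕜} (hx : ∀ k, x ≠ y k) :
    chargeField w y x ^ 2 = ∑ k, (w k * poleFraction (y k) x) ^ 2 +
      2 * ∑ k, w k * poleFraction (y k) x * chargeField w y (y k) := by
  classical
  have hpair (k l : ι) : w k * poleFraction (y k) x * (w l * poleFraction (y l) x) =
      (if k = l then (w k * poleFraction (y k) x) ^ 2 else 0) +
      w k * poleFraction (y k) x * (w l * poleFraction (y l) (y k)) +
      w l * poleFraction (y l) x * (w k * poleFraction (y k) (y l)) := by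
    rcases eq_or_ne k l with rfl | hkl
    · simp [sq]
    · rw [if_neg hkl]
      linear_combination w k * w l * poleFraction_mul (hx k) (hx l) (hy.ne hkl)
  have hswap : ∑ k, ∑ l, w l * poleFraction (y l) x * (w k * poleFraction (y k) (y l)) =
      ∑ k, w k * poleFraction (y k) x * chargeField w y (y k) := by
    rw [sum_comm]
    simp only [chargeField, mul_sum]
  rw [sq, chargeField, sum_mul_sum]
  simp only [hpair, sum_add_distrib, sum_ite_eq, mem_univ, if_true, hswap, ← mul_sum]
  rw [two_mul, ← add_assoc]
  rfl

end Scalars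

section Permutations

variable {α β : Type*} [Fintype α] [DecidableEq β] {f g : α → β}

lemma exists_perm_comp_eq (h : ∀ b, Fintype.card {a // f a = b} = Fintype.card {a // g a = b}) :
    ∃ ρ : Equiv.Perm α, g ∘ ρ = f :=
  ⟨.ofFiberEquiv fun b => Fintype.equivOfCardEq (h b),
    funext fun a => Equiv.ofFiberEquiv_map _ a⟩

variable [DecidableEq α] [Fintype β]

lemma card_perm_comp_eq (h : ∀ b, Fintype.card {a // f a = b} = Fintype.card {a // g a = b}) :
    #{ρ : Equiv.Perm α | g ∘ ρ = f} = ∏ b, (Fintype.card {a // g a = b}).factorial := by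
  obtain ⟨ρ₀, rfl⟩ := exists_perm_comp_eq h
  rw [← DomMulAct.stabilizer_card g, Fintype.card_subtype]
  refine card_equiv (Equiv.mulRight ρ₀⁻¹) fun ρ => ?_
  simp only [mem_filter_univ, Equiv.coe_mulRight, Equiv.Perm.coe_mul, ← Function.comp_assoc]
  exact (ρ₀.comp_symm_eq _ _).symm

lemma sum_perm_comp {M : Type*} [AddCommMonoid M] (φ : (α → β) → M) (g : α → β) :
    ∑ ρ : Equiv.Perm α, φ (g ∘ ρ) = (∏ b, (Fintype.card {a // g a = b}).factorial) •
      ∑ f : α → β with ∀ b, Fintype.card {a // f a = b} = Fintype.card {a // g a = b}, φ f := by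
  have himage : univ.image (fun ρ : Equiv.Perm α => g ∘ ρ) =
      ({f | ∀ b, Fintype.card {a // f a = b} = Fintype.card {a // g a = b}} : Finset (α → β)) := by
    ext f
    simp only [mem_image, mem_univ, true_and, mem_filter_univ]
    refine ⟨?_, exists_perm_comp_eq⟩
    rintro ⟨ρ, rfl⟩ b
    exact Fintype.card_congr (ρ.subtypeEquiv fun _ => Iff.rfl)
  rw [sum_comp φ, himage, smul_sum]
  exact sum_congr rfl fun f hf => by rw [card_perm_comp_eq (mem_filter_univ f |>.1 hf)]

lemma sum_perm_prod {R : Type*} [CommSemiring R] (c : α → β → R) (g : α → β) :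
    ∑ ρ : Equiv.Perm α, ∏ i, c (ρ i) (g i) = (∏ b, (Fintype.card {a // g a = b}).factorial) •
      ∑ f : α → β with ∀ b, Fintype.card {a // f a = b} = Fintype.card {a // g a = b},
        ∏ i, c i (f i) := by
  rw [← sum_perm_comp (fun f => ∏ i, c i (f i))]
  refine Fintype.sum_equiv (.inv _) _ _ fun ρ => Fintype.prod_equiv ρ _ _ fun i => ?_
  simp

end Permutations

section LinearForms

open MvPolynomial

variable {σ ι R : Type*} [Fintype σ] [DecidableEq σ] [Fintype ι] [DecidableEq ι] [CommSemiring R]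

lemma coeff_prod_sum_smul_X (c : ι → σ → R) (l : σ →₀ ℕ) :
    coeff l (∏ i, ∑ s, c i s • (X s : MvPolynomial σ R)) =
      ∑ f : ι → σ with ∀ s, Fintype.card {i // f i = s} = l s, ∏ i, c i (f i) := by
  have hmonomial (f : ι → σ) : ∏ i, c i (f i) • (X (f i) : MvPolynomial σ R) =
      monomial (∑ i, Finsupp.single (f i) 1) (∏ i, c i (f i)) := by
    rw [monomial_sum_prod]
    exact prod_congr rfl fun i _ => by rw [X, smul_monomial, smul_eq_mul, mul_one]
  have hexponent (f : ι → σ) :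
      ∑ i, Finsupp.single (f i) 1 = l ↔ ∀ s, Fintype.card {i // f i = s} = l s := by
    simp [Finsupp.ext_iff, Finsupp.finsetSum_apply, Finsupp.single_apply, Fintype.card_subtype]
  rw [prod_univ_sum, Fintype.piFinset_univ, coeff_sum, sum_filter]
  simp only [hmonomial, coeff_monomial, hexponent]

end LinearForms

section Model

open MvPolynomial

lemma natCast_val_sub_one {R : Type*} [AddGroupWithOne R] {k : ℕ} {a : Fin (k + 1)} (ha : a ≠ 0) :
    (((a - 1 : Fin (k + 1)) : ℕ) : R) = (a : ℕ) - 1 := by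
  rw [Fin.val_sub_one_of_ne_zero ha, Nat.cast_pred (Fin.pos_iff_ne_zero.2 ha)]

lemma natCast_val_add_one {R : Type*} [AddMonoidWithOne R] {k : ℕ} {a : Fin (k + 1)}
    (ha : (a : ℕ) ≠ k) :
    (((a + 1 : Fin (k + 1)) : ℕ) : R) = (a : ℕ) + 1 := by
  rw [Fin.val_add_one_of_lt' (by omega), Nat.cast_succ]

lemma mulShift_apply {ι : Type*} (c : ι → ℂ) (g : ι → ι) (v : ι → ℂ) (l : ι) :
    mulShift c g v l = c l * v (g l) := rfl

lemma E22_eq_neg_E11 (s : Fin n) : E22 m s = -E11 m s := by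
  ext v l
  simp [E22, E11, mulShift_apply]

lemma commute_E21 (s u : Fin n) : Commute (E21 m s) (E21 m u) := by
  rcases eq_or_ne s u with rfl | h
  · rfl
  · refine LinearMap.ext fun v => funext fun l => ?_
    simp only [E21, Module.End.mul_apply, mulShift_apply, Function.update_of_ne h,
      Function.update_of_ne h.symm, Function.update_comm h]
    ring

lemma E11_mul_E21 (s u : Fin n) :
    E11 m s * E21 m u = E21 m u * E11 m s - if s = u then E21 m u else 0 := by
  refine LinearMap.ext fun v => funext fun l => ?_
  rcases eq_or_ne s u with rfl | h
  · simp only [E21, E11, Module.End.mul_apply, LinearMap.sub_apply, if_true, mulShift_apply,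
      Pi.sub_apply, id, Function.update_self]
    by_cases h0 : l s = 0
    · simp [h0]
    · rw [natCast_val_sub_one h0]
      ring
  · simp only [E21, E11, Module.End.mul_apply, LinearMap.sub_apply, if_neg h, mulShift_apply,
      Pi.sub_apply, id, Function.update_of_ne h, LinearMap.zero_apply, Pi.zero_apply]
    ring

lemma E12_mul_E21_self (s : Fin n) : E12 m s * E21 m s = E21 m s * E12 m s + 2 • E11 m s := by
  refine LinearMap.ext fun v => funext fun l => ?_
  simp only [E21, E11, E12, Module.End.mul_apply, LinearMap.add_apply, two_smul,
    mulShift_apply, Pi.add_apply, id, Function.update_self,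
    Function.update_idem, add_sub_cancel_right, sub_add_cancel, Function.update_eq_self]
  have hraise : ((m s : ℂ) - (l s : ℕ)) * (((l s + 1 : Fin (m s + 1)) : ℕ) : ℂ) =
      (m s - (l s : ℕ)) * ((l s : ℕ) + 1) := by
    by_cases h : (l s : ℕ) = m s
    · simp [h]
    · rw [natCast_val_add_one h]
  have hlower : ((l s : ℕ) : ℂ) * (m s - ((l s - 1 : Fin (m s + 1)) : ℕ)) =
      (l s : ℕ) * (m s - ((l s : ℕ) - 1)) := by
    by_cases h : l s = 0
    · simp [h]
    · rw [natCast_val_sub_one h]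
  linear_combination (hraise - hlower) * v l

lemma commute_E12_E21_of_ne {s u : Fin n} (h : s ≠ u) : Commute (E12 m s) (E21 m u) := by
  refine LinearMap.ext fun v => funext fun l => ?_
  simp only [E21, E12, Module.End.mul_apply, mulShift_apply, Function.update_of_ne h,
    Function.update_of_ne h.symm, Function.update_comm h]
  ring

lemma E12_mul_E21 (s u : Fin n) :
    E12 m s * E21 m u = E21 m u * E12 m s + if s = u then 2 • E11 m u else 0 := by
  rcases eq_or_ne s u with rfl | h
  · rw [if_pos rfl, E12_mul_E21_self]
  · rw [if_neg h, add_zero, (commute_E12_E21_of_ne m h).eq]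

/-- The currents acting on `V`, with one site for each tensor factor. -/
def siteRep : Sl2CurrentRep ℂ (Fin n → ℂ) (TV m) :=
  .ofSites (E12 m) (E21 m) (E11 m) (commute_E21 m) (E11_mul_E21 m) (E12_mul_E21 m)

lemma siteRep_e (a : Fin n → ℂ) : (siteRep m).e a = ∑ s, a s • E12 m s :=
  Fintype.linearCombination_apply ℂ _ _

lemma siteRep_f (a : Fin n → ℂ) : (siteRep m).f a = ∑ s, a s • E21 m s :=
  Fintype.linearCombination_apply ℂ _ _

lemma siteRep_h (a : Fin n → ℂ) : (siteRep m).h a = ∑ s, a s • E11 m s :=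
  Fintype.linearCombination_apply ℂ _ _

/-- The linear map `∏ s, X s ^ l s ↦ (∏ s, e21^(s) ^ l s) v_0`, which equals `(∏ s, (l s)!) v_l`. -/
def ofPolynomial : MvPolynomial (Fin n) ℂ →ₗ[ℂ] TV m :=
  LinearMap.pi fun l =>
    (∏ s, ((l s : ℕ).factorial : ℂ)) • lcoeff ℂ (Finsupp.equivFunOnFinite.symm fun s => (l s : ℕ))

lemma ofPolynomial_apply (p : MvPolynomial (Fin n) ℂ) (l : Idx m) :
    ofPolynomial m p l = (∏ s, ((l s : ℕ).factorial : ℂ)) *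
      coeff (Finsupp.equivFunOnFinite.symm fun s => (l s : ℕ)) p := rfl

lemma ofPolynomial_one_of_ne_zero {l : Idx m} {s : Fin n} (h : l s ≠ 0) :
    ofPolynomial m 1 l = 0 := by
  rw [ofPolynomial_apply, coeff_one, if_neg, mul_zero]
  intro h0
  exact h (Fin.ext congr($h0 s).symm)

lemma prod_factorial_eq_mul_update {l : Idx m} {s : Fin n} (h : l s ≠ 0) :
    ∏ u, ((l u : ℕ).factorial : ℂ) =
      (l s : ℕ) * ∏ u, ((Function.update l s (l s - 1) u : ℕ).factorial : ℂ) := by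
  rw [← mul_prod_erase _ _ (mem_univ s), ← mul_prod_erase univ
    (fun u => ((Function.update l s (l s - 1) u : ℕ).factorial : ℂ)) (mem_univ s), ← mul_assoc]
  congr 1
  · rw [Function.update_self, Fin.val_sub_one_of_ne_zero h, ← Nat.cast_mul,
      Nat.mul_factorial_pred (Fin.val_ne_zero_iff.2 h)]
  · exact prod_congr rfl fun u hu => by rw [Function.update_of_ne (ne_of_mem_erase hu)]

lemma ofPolynomial_X_mul (s : Fin n) (p : MvPolynomial (Fin n) ℂ) :
    ofPolynomial m (X s * p) = E21 m s (ofPolynomial m p) := by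
  ext l
  rw [ofPolynomial_apply, E21, mulShift_apply, ofPolynomial_apply, coeff_X_mul']
  by_cases h : l s = 0
  · simp [h]
  · have hexponent : (Finsupp.equivFunOnFinite.symm fun u => (l u : ℕ)) - Finsupp.single s 1 =
        Finsupp.equivFunOnFinite.symm fun u => (Function.update l s (l s - 1) u : ℕ) := by
      ext u
      rcases eq_or_ne u s with rfl | hu
      · simp [Fin.val_sub_one_of_ne_zero h]
      · simp [hu]
    rw [if_pos (by simpa using h), hexponent, prod_factorial_eq_mul_update m h, mul_assoc]

/-- The weight `a ↦ ∑ s, a s * (m s / 2)` of the highest weight vector of `V`. -/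
def topWeight : (Fin n → ℂ) →ₗ[ℂ] ℂ :=
  Fintype.linearCombination ℂ fun s => (m s : ℂ) / 2

lemma isHighestWeight_ofPolynomial_one :
    (siteRep m).IsHighestWeight (topWeight m) (ofPolynomial m 1) := by
  refine .ofSites _ _ _ (fun s => funext fun l => ?_) fun s => funext fun l => ?_
  · rw [E12, mulShift_apply]
    by_cases h : (l s : ℕ) = m s
    · simp [h]
    · rw [ofPolynomial_one_of_ne_zero m (s := s), mul_zero, Pi.zero_apply]
      rw [Function.update_self, Fin.ne_iff_vne, Fin.val_add_one_of_lt' (by omega)]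
      exact Nat.succ_ne_zero _
  · rw [E11, mulShift_apply, Pi.smul_apply, smul_eq_mul, id]
    by_cases h : l s = 0
    · simp [h]
    · simp [ofPolynomial_one_of_ne_zero m h]

lemma ofPolynomial_prod_eq_state {ι : Type*} (c : ι → Fin n → ℂ) (S : Finset ι) :
    ofPolynomial m (∏ i ∈ S, ∑ s, c i s • X s) = (siteRep m).state c S (ofPolynomial m 1) := by
  classical
  induction S using Finset.induction with
  | empty => simp
  | insert i S hi ih =>
    rw [prod_insert hi, Sl2CurrentRep.state_insert _ hi, ← ih]
    simp [siteRep_f, sum_mul, ofPolynomial_X_mul]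

end Model

section BetheVector

open MvPolynomial

variable {m} {m' : ℕ} {l : Idx m}

lemma card_finSigmaFinEquiv_symm_fst_eq (s : Fin n) :
    Fintype.card {i // (finSigmaFinEquiv.symm i : (s : Fin n) × Fin (l s : ℕ)).1 = s} = l s := by
  have e : {i // (finSigmaFinEquiv.symm i : (s : Fin n) × Fin (l s : ℕ)).1 = s} ≃ Fin (l s : ℕ) :=
    (Equiv.subtypeEquiv finSigmaFinEquiv.symm fun _ => Iff.rfl).trans (Equiv.sigmaSubtype s)
  rw [Fintype.card_congr e, Fintype.card_fin]

lemma val_finSigmaFinEquiv_eq_pref_add (s : Fin n) (j : Fin (l s : ℕ)) :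
    (finSigmaFinEquiv (⟨s, j⟩ : (s : Fin n) × Fin (l s : ℕ)) : ℕ) = pref m l s + j := by
  rw [finSigmaFinEquiv_apply, pref]
  congr 1
  exact sum_bij (fun i _ => Fin.castLE s.2.le i) (fun i _ => mem_filter.2 ⟨mem_univ _, i.2⟩)
    (fun i _ j _ hij => by simpa using hij)
    (fun u hu => ⟨⟨u, (mem_filter.1 hu).2⟩, mem_univ _, rfl⟩) fun _ _ => rfl

lemma prod_prod_Ico_pref (z : Fin n → ℂ) (t : Fin (∑ s, (l s : ℕ)) → ℂ) :
    ∏ s, ∏ i ∈ Ico (pref m l s) (pref m l s + l s), (extt t i - z s)⁻¹ =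
      ∏ i, (t i - z (finSigmaFinEquiv.symm i : (s : Fin n) × Fin (l s : ℕ)).1)⁻¹ := by
  rw [← Equiv.prod_comp finSigmaFinEquiv, Fintype.prod_sigma]
  refine prod_congr rfl fun s _ => ?_
  rw [prod_Ico_eq_prod_range, add_tsub_cancel_left, prod_range]
  refine prod_congr rfl fun j _ => ?_
  rw [Equiv.symm_apply_apply, ← val_finSigmaFinEquiv_eq_pref_add, extt, dif_pos (Fin.is_lt _)]

lemma omegaCoeff_eq_ofPolynomial (z : Fin n → ℂ) (t : Fin m' → ℂ) (hl : ∑ s, (l s : ℕ) = m') :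
    omegaCoeff m z t l = ofPolynomial m (∏ i, ∑ s, (t i - z s)⁻¹ • X s) l := by
  subst hl
  have h := sum_perm_prod (fun i s => (t i - z s)⁻¹)
    fun i => (finSigmaFinEquiv.symm i : (s : Fin n) × Fin (l s : ℕ)).1
  simp only [card_finSigmaFinEquiv_symm_fst_eq, nsmul_eq_mul, Nat.cast_prod] at h
  simp only [omegaCoeff, prod_prod_Ico_pref, Function.comp_apply]
  rw [h, ofPolynomial_apply, coeff_prod_sum_smul_X]
  congr!

lemma ofPolynomial_prod_eq_zero (c : Fin m' → Fin n → ℂ) (hl : ∑ s, (l s : ℕ) ≠ m') :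
    ofPolynomial m (∏ i, ∑ s, c i s • X s) l = 0 := by
  rw [ofPolynomial_apply, coeff_prod_sum_smul_X]
  refine mul_eq_zero_of_right _ (sum_eq_zero fun f hf => absurd ?_ hl)
  have hfiber : ∀ s, Fintype.card {i // f i = s} = l s := by simpa using hf
  calc ∑ s, (l s : ℕ)
      = ∑ s, Fintype.card {i // f i = s} := sum_congr rfl fun s _ => (hfiber s).symm
    _ = m' := by rw [← Fintype.card_sigma, Fintype.card_congr (Equiv.sigmaFiberEquiv f),
      Fintype.card_fin]

lemma betheVec_eq_state (z : Fin n → ℂ) (t : Fin m' → ℂ) :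
    betheVec m z t =
      (siteRep m).state (fun i s => (t i - z s)⁻¹) univ (ofPolynomial m 1) := by
  rw [← ofPolynomial_prod_eq_state]
  ext l
  rw [betheVec]
  split_ifs with hl
  · exact omegaCoeff_eq_ofPolynomial z t hl
  · exact (ofPolynomial_prod_eq_zero _ hl).symm

end BetheVector

section BetheEquations

open Sl2CurrentRep

variable {z : Fin n → ℂ} {μ : ℂ} {m' : ℕ} {t : Fin m' → ℂ}

/-- The quantity `μ + ν / 2`, where `ν = M - 2 m'` is the weight of the Bethe vector. -/
def shiftedWeight (μ : ℂ) (m' : ℕ) : ℂ := μ + ((∑ s, (m s : ℂ)) - 2 * m') / 2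

/-- The field of the charges `m s / 2` at `z s` and `-1` at `t i`. -/
def betheField (z : Fin n → ℂ) (t : Fin m' → ℂ) (x : ℂ) : ℂ :=
  chargeField (Sum.elim (fun s => (m s : ℂ) / 2) fun _ => -1) (Sum.elim z t) x

variable {m}

lemma BAE.injective_sumElim (ht : BAE m z μ t) (hz : z.Injective) : (Sum.elim z t).Injective :=
  hz.sumElim ht.1 fun s i => (ht.2.2.1 i s).symm

lemma BAE.two_mul_betheField_self (ht : BAE m z μ t) (i : Fin m') :
    2 * betheField m z t (t i) = shiftedWeight m μ m' + 1 := by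
  obtain ⟨htinj, ht0, htz, heq⟩ := ht
  have hcard : ∑ k ∈ univ.erase i, (-1 : ℂ) = 1 - m' := by
    rw [sum_erase_eq_sub (mem_univ i)]
    simp [neg_add_eq_sub]
  have hsite : ∑ s, (m s : ℂ) / 2 / (t i - z s) = (∑ s, (m s : ℂ) / (t i - z s)) / 2 := by
    simp only [sum_div, div_right_comm]
  have hpair : ∑ j ∈ univ.erase i, (-1 : ℂ) / (t i - t j) =
      -(∑ j ∈ univ.erase i, 2 / (t i - t j)) / 2 := by
    rw [← sum_neg_distrib, sum_div]
    exact sum_congr rfl fun j _ => by ring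
  have hbethe := congrArg (t i * ·) (heq i)
  simp only [mul_sub, mul_add, mul_zero, mul_div_cancel₀ _ (ht0 i)] at hbethe
  rw [betheField, chargeField_sumElim, chargeField_eq_of_forall_ne _ (htz i),
    chargeField_self _ htinj, hcard, hsite, hpair, ← sum_div, shiftedWeight]
  linear_combination hbethe

lemma kEig_eq_mul_sub_betheField (hz : z.Injective) (htz : ∀ i s, t i ≠ z s) (s : Fin n) :
    kEig m z μ t s =
      m s / 2 * (shiftedWeight m μ m' - m s / 2 - 2 * betheField m z t (z s)) := by
  have hsite : ∑ p ∈ univ.erase s, (m p : ℂ) * z s / (z s - z p) =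
      2 * (z s * ∑ p ∈ univ.erase s, (m p : ℂ) / 2 / (z s - z p)) := by
    simp only [mul_sum]
    exact sum_congr rfl fun p _ => by ring
  have hpair : ∑ i, z s / (t i - z s) = z s * ∑ i, (-1) / (z s - t i) := by
    rw [mul_sum]
    exact sum_congr rfl fun i _ => by rw [← neg_sub, div_neg, neg_div, mul_neg, mul_one_div]
  rw [kEig, hsite, hpair, betheField, chargeField_sumElim, chargeField_self _ hz,
    chargeField_eq_of_forall_ne _ fun i => (htz i s).symm, ← sum_div,
    sum_erase_eq_sub (f := fun p => (m p : ℂ)) (mem_univ s), sum_const, card_univ,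
    Fintype.card_fin, nsmul_eq_mul, shiftedWeight]
  ring

lemma cartanWeight_topWeight (z : Fin n → ℂ) (μ : ℂ) (t : Fin m' → ℂ) (x : ℂ) :
    cartanWeight (topWeight m) (μ / 2) (fun s => poleFraction (z s) x)
      (fun i => poleFraction (t i) x) univ =
      betheField m z t x - shiftedWeight m μ m' / 2 := by
  rw [betheField, chargeField_sumElim]
  simp only [cartanWeight, topWeight, chargeField, shiftedWeight, Fintype.linearCombination_apply,
    invOf_eq_inv, Pi.sub_apply, Pi.smul_apply, Pi.one_apply, smul_eq_mul, sub_mul,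
    sum_sub_distrib, mul_one, neg_one_mul, sum_neg_distrib, sum_const, card_univ,
    Fintype.card_fin, nsmul_eq_mul, ← mul_sum, ← sum_div, mul_comm (poleFraction _ x)]
  ring

lemma BAE.topWeight_sub_eq (ht : BAE m z μ t) (hz : z.Injective) {x : ℂ} (hxz : ∀ s, x ≠ z s)
    (hxt : ∀ i, x ≠ t i) (i : Fin m') :
    topWeight m ((fun s => poleFraction (z s) x) * fun s => (t i - z s)⁻¹) -
      ∑ j ∈ univ.erase i, poleFraction (t j) x * (t i - t j)⁻¹ =
    (t i - x)⁻¹ * cartanWeight (topWeight m) (μ / 2) (fun s => poleFraction (z s) x)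
      (fun i => poleFraction (t i) x) (univ.erase i) := by
  have hpair := sum_mul_poleFraction_mul_inv_sub (Sum.elim (fun s => (m s : ℂ) / 2) fun _ => -1)
    (ht.injective_sumElim hz) (Sum.forall.2 ⟨hxz, hxt⟩) (.inr i)
  simp only [Fintype.sum_sum_type, Sum.elim_inl, Sum.elim_inr, neg_one_mul, sum_neg_distrib]
    at hpair
  have hself := ht.two_mul_betheField_self i
  rw [sum_erase _ (by simp), cartanWeight_erase (mem_univ i), cartanWeight_topWeight, topWeight,
    Fintype.linearCombination_apply, invOf_eq_inv]
  simp only [Pi.mul_apply, smul_eq_mul, mul_comm _ ((m _ : ℂ) / 2), betheField] at hself ⊢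
  linear_combination hpair - (t i - x)⁻¹ / 2 * hself

lemma BAE.betheField_sq (ht : BAE m z μ t) (hz : z.Injective) {x : ℂ}
    (hxz : ∀ s, x ≠ z s) (hxt : ∀ i, x ≠ t i) :
    betheField m z t x ^ 2 = ∑ s, (m s / 2 * poleFraction (z s) x) ^ 2 +
      ∑ i, poleFraction (t i) x ^ 2 +
      ∑ s, m s * poleFraction (z s) x * betheField m z t (z s) -
      (shiftedWeight m μ m' + 1) * ∑ i, poleFraction (t i) x := by
  have hsites : 2 * ∑ s, m s / 2 * poleFraction (z s) x * betheField m z t (z s) =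
      ∑ s, m s * poleFraction (z s) x * betheField m z t (z s) := by
    rw [mul_sum]
    exact sum_congr rfl fun s _ => by ring
  have hroots : 2 * ∑ i, -poleFraction (t i) x * betheField m z t (t i) =
      -((shiftedWeight m μ m' + 1) * ∑ i, poleFraction (t i) x) := by
    rw [mul_sum, mul_sum, ← sum_neg_distrib]
    exact sum_congr rfl fun i _ => by
      linear_combination -poleFraction (t i) x * ht.two_mul_betheField_self i
  have hsq := chargeField_sq (Sum.elim (fun s => (m s : ℂ) / 2) fun _ => -1)
    (ht.injective_sumElim hz) (Sum.forall.2 ⟨hxz, hxt⟩)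
  simp only [Fintype.sum_sum_type, Sum.elim_inl, Sum.elim_inr, neg_one_mul, neg_sq] at hsq
  simp only [betheField] at hsites hroots ⊢
  linear_combination hsq + hsites + hroots

lemma BAE.E2fun_eq (ht : BAE m z μ t) (hz0 : ∀ s, z s ≠ 0) (hz : z.Injective) {x : ℂ}
    (hxz : ∀ s, x ≠ z s) (hxt : ∀ i, x ≠ t i) :
    E2fun m z μ t x = -(2 * Real.pi * I) ^ 2 *
      (cartanWeight (topWeight m) (μ / 2) (fun s => poleFraction (z s) x)
          (fun i => poleFraction (t i) x) univ ^ 2 +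
        topWeight m ((fun s => poleFraction (z s) x) ^ 2 - fun s => poleFraction (z s) x) -
        ∑ i, (poleFraction (t i) x ^ 2 - poleFraction (t i) x)) := by
  have hterm (s : Fin n) : (m s * (m s + 2) / 4 + kEig m z μ t s) / (1 - x / z s) -
      m s * (m s + 2) / 4 / (1 - x / z s) ^ 2 =
      shiftedWeight m μ m' * (m s / 2 * poleFraction (z s) x) -
        (m s / 2 * poleFraction (z s) x) ^ 2 -
        m s * poleFraction (z s) x * betheField m z t (z s) -
        (poleFraction (z s) x ^ 2 - poleFraction (z s) x) * (m s / 2) := by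
    rw [div_eq_mul_inv _ (1 - _), div_eq_mul_inv _ ((1 - _) ^ 2), ← inv_pow,
      inv_one_sub_div_eq_poleFraction (hz0 s), kEig_eq_mul_sub_betheField hz ht.2.2.1]
    ring
  have hfield : betheField m z t x =
      ∑ s, m s / 2 * poleFraction (z s) x - ∑ i, poleFraction (t i) x := by
    simp [betheField, chargeField, sub_eq_add_neg]
  rw [cartanWeight_topWeight, E2fun, ← shiftedWeight, sum_congr rfl fun s _ => hterm s, topWeight,
    Fintype.linearCombination_apply]
  simp only [sum_sub_distrib, ← mul_sum, Pi.sub_apply, Pi.pow_apply, smul_eq_mul]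
  linear_combination (2 * Real.pi * I) ^ 2 *
    (ht.betheField_sq hz hxz hxt - shiftedWeight m μ m' * hfield)

end BetheEquations

section DifferentialOperator

open scoped Topology

variable {z : Fin n → ℂ} {x : ℂ}

lemma M11_eq_siteRep_h (hz0 : ∀ s, z s ≠ 0) (x : ℂ) :
    M11 m z x = (2 * Real.pi * I) •
      (siteRep m).h ((fun s => poleFraction (z s) x) - (⅟2 : ℂ) • 1) := by
  simp only [M11, e11T, siteRep_h, inv_one_sub_div_eq_poleFraction (hz0 _), smul_sum,
    ← sum_sub_distrib, invOf_eq_inv, Pi.sub_apply, Pi.smul_apply, Pi.one_apply]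
  exact sum_congr rfl fun s _ => by module

lemma M22_eq_neg_M11 (z : Fin n → ℂ) (x : ℂ) : M22 m z x = -M11 m z x := by
  simp only [M22, M11, e22T, e11T, E22_eq_neg_E11, smul_neg, sum_neg_distrib]
  abel

lemma M12_eq_siteRep_f (hz0 : ∀ s, z s ≠ 0) (x : ℂ) :
    M12 m z x = (2 * Real.pi * I) • (siteRep m).f ((fun s => poleFraction (z s) x) - 1) := by
  simp only [M12, e21T, siteRep_f, inv_one_sub_div_eq_poleFraction (hz0 _), smul_sum,
    ← sum_sub_distrib, Pi.sub_apply, Pi.one_apply]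
  exact sum_congr rfl fun s _ => by module

lemma M21_eq_siteRep_e (hz0 : ∀ s, z s ≠ 0) (x : ℂ) :
    M21 m z x = (2 * Real.pi * I) • (siteRep m).e fun s => poleFraction (z s) x := by
  simp only [M21, siteRep_e, inv_one_sub_div_eq_poleFraction (hz0 _)]

lemma smul_M22d_eq_siteRep_h (hz0 : ∀ s, z s ≠ 0) (hx : ∀ s, x ≠ z s) :
    x • M22d m z x = -(2 * Real.pi * I) •
      (siteRep m).h ((fun s => poleFraction (z s) x) ^ 2 - fun s => poleFraction (z s) x) := by
  have hderiv (s : Fin n) : x * ((z s)⁻¹ * poleFraction (z s) x ^ 2) =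
      poleFraction (z s) x ^ 2 - poleFraction (z s) x := by
    have := hz0 s
    have := sub_ne_zero.2 (hx s).symm
    rw [poleFraction]
    field_simp
    ring
  simp only [M22d, siteRep_h, inv_one_sub_div_eq_poleFraction (hz0 _), Pi.sub_apply, Pi.pow_apply,
    ← hderiv, smul_sum, E22_eq_neg_E11]
  exact sum_congr rfl fun s _ => by module

lemma D2_eq_transfer (hz0 : ∀ s, z s ≠ 0) (μ : ℂ) (hx : ∀ s, x ≠ z s) :
    D2 m z μ x = -(2 * Real.pi * I) ^ 2 •
      (siteRep m).transfer (μ / 2) fun s => poleFraction (z s) x := by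
  have hcomm := (siteRep m).e_mul_f (fun s => poleFraction (z s) x)
    ((fun s => poleFraction (z s) x) - 1)
  rw [mul_sub_one, ← sq] at hcomm
  have hdiag : -(Real.pi * I * μ) • (1 : Module.End ℂ (TV m)) + M11 m z x =
      (2 * Real.pi * I) • (siteRep m).cartan (μ / 2) fun s => poleFraction (z s) x := by
    rw [M11_eq_siteRep_h m hz0, Sl2CurrentRep.cartan]
    module
  have hdiag' : (Real.pi * I * μ) • (1 : Module.End ℂ (TV m)) + M22 m z x =
      -(2 * Real.pi * I) • (siteRep m).cartan (μ / 2) fun s => poleFraction (z s) x := by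
    rw [M22_eq_neg_M11]
    linear_combination (norm := module) -hdiag
  rw [D2, hdiag, hdiag', mul_smul _ x, smul_M22d_eq_siteRep_h m hz0 hx, M21_eq_siteRep_e m hz0,
    M12_eq_siteRep_f m hz0, smul_mul_smul_comm, smul_mul_smul_comm, hcomm,
    Sl2CurrentRep.transfer, sq ((siteRep m).cartan _ _)]
  module

variable {m} {μ : ℂ} {m' : ℕ} {t : Fin m' → ℂ}

lemma BAE.D2_betheVec_of_forall_ne (ht : BAE m z μ t) (hz0 : ∀ s, z s ≠ 0) (hz : z.Injective)
    (hxz : ∀ s, x ≠ z s) (hxt : ∀ i, x ≠ t i) :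
    D2 m z μ x (betheVec m z t) = E2fun m z μ t x • betheVec m z t := by
  rw [D2_eq_transfer m hz0 μ hxz, betheVec_eq_state, LinearMap.smul_apply,
    (isHighestWeight_ofPolynomial_one m).transfer_state_of_bethe
      (isPartialFraction_poleFraction ht.1 hxz hxt ht.2.2.1) _ _
      fun i _ => ht.topWeight_sub_eq hz hxz hxt i,
    smul_smul, ht.E2fun_eq hz0 hz hxz hxt]

lemma continuousAt_inv_one_sub_div {𝕜 : Type*} [NormedField 𝕜] {x y : 𝕜} (hx : x ≠ y) :
    ContinuousAt (fun x => (1 - x / y)⁻¹) x :=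
  ContinuousAt.inv₀ (by fun_prop) (sub_ne_zero.2 fun h => hx (eq_of_div_eq_one h.symm))

lemma continuousAt_D2 (hx : ∀ s, x ≠ z s) (v : TV m) :
    ContinuousAt (fun y => D2 m z μ y v) x := by
  have h := fun s => continuousAt_inv_one_sub_div (hx s)
  simp only [D2, M11, M22, M22d, M21, M12, LinearMap.sub_apply, LinearMap.add_apply,
    LinearMap.smul_apply, LinearMap.sum_apply, Module.End.mul_apply, Module.End.one_apply,
    map_sum, map_smul, map_sub, map_add]
  fun_prop

lemma continuousAt_E2fun (hx : ∀ s, x ≠ z s) :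
    ContinuousAt (E2fun m z μ t) x := by
  have h := fun s => continuousAt_inv_one_sub_div (hx s)
  unfold E2fun
  simp only [div_eq_mul_inv _ (1 - _ / z _), div_eq_mul_inv _ ((1 - _ / z _) ^ 2), ← inv_pow]
  fun_prop

lemma eventually_nhdsNE_forall_ne {ι : Type*} [Finite ι] {X : Type*} [TopologicalSpace X]
    [T1Space X] (y : ι → X) (x : X) : ∀ᶠ x' in 𝓝[≠] x, ∀ i, x' ≠ y i := by
  filter_upwards [nhdsNE_le_cofinite x (Set.finite_range y).compl_mem_cofinite] with x' hx' i h
  exact hx' ⟨i, h.symm⟩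

end DifferentialOperator

/-- Lemma 5.4 of the paper.  If `t⁰` is a solution of the Bethe ansatz
equations for `(z; μ; V[ν])`, `ν = M - 2m'`, then for every `x ∈ ℂ∖{z_1,…,z_n}`:
`D₂(x) ω(t⁰,z) = (2πi)² [ -(μ+ν/2)²/4 + Σ_s ( (m_s(m_s+2)/4 + k_s)/(1-x/z_s)
- (m_s(m_s+2)/4)/(1-x/z_s)² ) ] ω(t⁰,z)`. -/
theorem statement6
    (n : ℕ) (hn : 1 < n) (m : Fin n → ℕ) (hm : ∀ s, 0 < m s)
    (M : ℕ) (hM : M = ∑ s, m s)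
    (z : Fin n → ℂ) (hz0 : ∀ s, z s ≠ 0) (hz : Function.Injective z)
    (μ : ℂ) (m' : ℕ) (ν : ℤ) (hν : ν = (M : ℤ) - 2 * (m' : ℤ))
    (t : Fin m' → ℂ) (ht : BAE m z μ t)
    (x : ℂ) (hx : ∀ s, x ≠ z s) :
    D2 m z μ x (betheVec m z t) = E2fun m z μ t x • betheVec m z t := by
  have hcD : ContinuousAt (fun y => D2 m z μ y (betheVec m z t)) x := continuousAt_D2 hx _
  have hcE : ContinuousAt (fun y => E2fun m z μ t y • betheVec m z t) x :=
    (continuousAt_E2fun hx).smul continuousAt_const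
  refine ((hcD.eventuallyEq_nhds_iff_eventuallyEq_nhdsNE hcE).1 ?_).eq_of_nhds
  filter_upwards [eventually_nhdsNE_forall_ne z x, eventually_nhdsNE_forall_ne t x]
    with y hyz hyt
  exact ht.D2_betheVec_of_forall_ne hz0 hz hyz hyt

end
end Paper
end

section
/- Assume μ ∉ M/2 + ℤ and ν = M − 2m. Let t⁰ be a solution of the Bethe ansatz equations for (z; μ; V[ν]), and let ỹ(X) = Π_{i=1}^{M−m}(X − t̃⁰_i) be the unique monic polynomial of degree M − m with (μ − ν/2)·y·ỹ + X·(y·ỹ′ − y′·ỹ) = (μ + ν/2)·Π_{s=1}^n (X − z_s)^{m_s}, where y(X) = Π_{i=1}^m(X − t⁰_i). Assume t̃⁰_1,…,t̃⁰_{M−m} are pairwise distinct and ỹ(z_s) ≠ 0 for all s. Then there is a nonzero constant c ∈ ℂ such that A(μ + ν/2 − 1)·ω(t⁰, z) = c·ω(t̃⁰, z), where ω(t⁰,z) ∈ V[ν] and ω(t̃⁰,z) ∈ V[−ν] are the Bethe vectors. -/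
open Complex Finset

namespace Paper

noncomputable section

variable {n : ℕ}

variable (m : Fin n → ℕ)

/-!
Realise `V` by polynomials in `x_1, …, x_n`, with `∏ x_s ^ l_s` standing for `(∏ l_s!) v_l`. Then
`ω(t, z)` is `∏_i ∑_s x_s / (t_i - z_s)`, so its coordinates are permanents of Cauchy matrices
`1 / (t_i - z_s)`. The operator `e21` is multiplication by `∑ x_s`, while `e12` is a second order
differential operator. The Bethe ansatz equations with `0` as an additional site say that the
product `∏_i (X / t_i + ∑_s x_s / (t_i - z_s))` is killed by such an operator in the variables
`X, x_1, …, x_n`; hence its coefficients in `X` are, up to known scalars, the vectors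
`e12 ^ k ω(t, z)`. The scalars are those of `p(κ)`, so `p(κ) ω(t, z)` is this product evaluated at
`X = -∑ x_s`. Its coordinates are those of `ω(t, z)` multiplied by `∏ z_s ^ l_s` and a constant.

It remains to compare the coordinates of `p(κ) ω(t, z)` at `l` with those of `ω(t̃, z)` at `m - l`:
these are permanents attached to complementary submultisets of the roots `ζ` of the Wronskian.
For distinct `ζ` the residue theorem gives weights that make the Cauchy matrices of `t` and `t̃`
orthogonal, and the Wronskian identity gives weights that do the same for their entrywise squares.
Complementary minors of orthogonal matrices are proportional, and Borchardt's identity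
`det (a_ij) perm (a_ij) = det (a_ij ^ 2)` turns the two proportionalities into one for permanents.
Repeated roots are reached by continuity.
-/

section LinearAlgebra

/-- The Cauchy matrix `(1 / (t i - z k))`. -/
def cauchyMatrix {K I J : Type*} [Field K] (t : I → K) (z : J → K) : Matrix I J K :=
  Matrix.of fun i k => (t i - z k)⁻¹

variable {K : Type*} [Field K] {R : Type*} [CommRing R]
  {I J : Type*} [Fintype I] [DecidableEq I] [Fintype J] [DecidableEq J]

theorem det_mul_permanent (A : Matrix I I R) :
    A.det * A.permanent =
      ∑ π : Equiv.Perm I, (Matrix.of fun i k => A i k * A i (π k)).det := by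
  simp only [Matrix.det_apply', Matrix.permanent, Matrix.of_apply, Finset.sum_mul_sum]
  rw [Finset.sum_comm (s := (univ : Finset (Equiv.Perm I)))
    (f := fun π σ : Equiv.Perm I =>
      ((Equiv.Perm.sign σ : ℤ) : R) * ∏ k, A (σ k) k * A (σ k) (π k))]
  refine Finset.sum_congr rfl fun σ _ => ?_
  rw [← Equiv.sum_comp ((Equiv.inv (Equiv.Perm I)).trans (Equiv.mulLeft σ))]
  refine Finset.sum_congr rfl fun π _ => ?_
  have reindex : ∏ k, A ((σ * π⁻¹) k) k = ∏ k, A (σ k) (π k) := by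
    rw [← Equiv.prod_comp π]
    simp
  rw [Finset.prod_mul_distrib, mul_assoc, ← reindex]
  rfl

theorem det_cauchyMatrix_mul_comp_perm_eq_zero {t z : I → K} (hz : Function.Injective z)
    (htz : ∀ i k, t i ≠ z k) {π : Equiv.Perm I} (hπ : π ≠ 1) :
    (Matrix.of fun i k => cauchyMatrix t z i k * cauchyMatrix t z i (π k)).det = 0 := by
  rw [← Matrix.exists_mulVec_eq_zero_iff]
  refine ⟨fun k => z k - z (π k), fun h => hπ ?_, ?_⟩
  · ext k
    exact (hz (sub_eq_zero.1 (congrFun h k))).symm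
  · ext i
    have partial_fractions (k : I) : (t i - z k)⁻¹ * (t i - z (π k))⁻¹ * (z k - z (π k)) =
        (t i - z k)⁻¹ - (t i - z (π k))⁻¹ := by
      have := sub_ne_zero.2 (htz i k)
      have := sub_ne_zero.2 (htz i (π k))
      field_simp
      ring
    simp only [Matrix.mulVec, dotProduct, Matrix.of_apply, Pi.zero_apply, cauchyMatrix,
      partial_fractions, Finset.sum_sub_distrib]
    rw [Equiv.sum_comp π fun k => (t i - z k)⁻¹, sub_self]

theorem borchardt {t z : I → K} (hz : Function.Injective z) (htz : ∀ i k, t i ≠ z k) :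
    (cauchyMatrix t z).det * (cauchyMatrix t z).permanent =
      ((cauchyMatrix t z).map (· ^ 2)).det := by
  rw [det_mul_permanent, Finset.sum_eq_single 1
    (fun π _ hπ => det_cauchyMatrix_mul_comp_perm_eq_zero hz htz hπ) (by simp)]
  exact congrArg _ (Matrix.ext fun i k => (sq _).symm)

theorem det_cauchyMatrix_ne_zero {t z : I → K} (ht : Function.Injective t)
    (hz : Function.Injective z) (htz : ∀ i k, t i ≠ z k) : (cauchyMatrix t z).det ≠ 0 := by
  refine fun hdet => ?_
  obtain ⟨v, hv, hker⟩ := Matrix.exists_mulVec_eq_zero_iff.2 hdet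
  let p := Lagrange.interpolate univ z fun k => v k / Lagrange.nodalWeight univ z k
  have hweight (k : I) : Lagrange.nodalWeight univ z k ≠ 0 :=
    Lagrange.nodalWeight_ne_zero hz.injOn (mem_univ k)
  have hp : p = 0 := by
    refine Polynomial.eq_zero_of_degree_lt_of_eval_index_eq_zero (v := t) (s := univ) ht.injOn
      (Lagrange.degree_interpolate_lt _ hz.injOn) fun i _ => ?_
    rw [Lagrange.eval_interpolate_not_at_node _ fun k _ => htz i k]
    refine mul_eq_zero_of_right _ ((Finset.sum_congr rfl fun k _ => ?_).trans (congrFun hker i))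
    have := hweight k
    simp only [cauchyMatrix, Matrix.of_apply]
    field_simp
  refine hv (funext fun k => ?_)
  have hval := Lagrange.eval_interpolate_at_node
    (fun k => v k / Lagrange.nodalWeight univ z k) hz.injOn (mem_univ k)
  rw [show Lagrange.interpolate univ z _ = p from rfl, hp, Polynomial.eval_zero] at hval
  simpa [hweight k] using hval.symm

theorem det_minor_mul_det_complementary_minor {M : Matrix I (I ⊕ J) R} {N : Matrix J (I ⊕ J) R}
    (h : M * N.transpose = 0) (π : Equiv.Perm (I ⊕ J)) :
    ((Equiv.Perm.sign π : ℤ) : R) * (M.submatrix id (π ∘ Sum.inl)).det *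
        (N.submatrix id Sum.inr).det =
      (M.submatrix id Sum.inl).det * (N.submatrix id (π ∘ Sum.inr)).det := by
  let Y : Matrix (I ⊕ J) (I ⊕ J) R := Matrix.fromBlocks 1 (N.submatrix id Sum.inl).transpose
    0 (N.submatrix id Sum.inr).transpose
  have Y_inr : ∀ x j, Y x (Sum.inr j) = N j x := by
    rintro (k | l) j <;> rfl
  have mul_Y : M * Y = Matrix.fromCols (M.submatrix id Sum.inl) 0 := by
    rw [← h]
    ext i (k | j) <;> simp [Y, Matrix.mul_apply, Matrix.one_apply]
  let X : Matrix (I ⊕ J) (I ⊕ J) R := Matrix.fromBlocks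
    (M.submatrix id (π ∘ Sum.inl)) (M.submatrix id (π ∘ Sum.inr)) 0 1
  have hXY : X * Y.submatrix π id = Matrix.fromBlocks (M.submatrix id Sum.inl) 0
      (Y.submatrix (π ∘ Sum.inr) Sum.inl) (N.submatrix id (π ∘ Sum.inr)).transpose := by
    have upper : M.submatrix id π * Y.submatrix π id =
        Matrix.fromCols (M.submatrix id Sum.inl) 0 := by
      rw [Matrix.submatrix_mul_equiv, mul_Y, Matrix.submatrix_id_id]
    ext (i | j) c
    · have row : X (Sum.inl i) = (M.submatrix id π) i := by
        ext (k | l) <;> rfl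
      rw [Matrix.mul_apply, row, ← Matrix.mul_apply, upper]
      cases c <;> rfl
    · have row : X (Sum.inr j) = (1 : Matrix (I ⊕ J) (I ⊕ J) R) (Sum.inr j) := by
        ext (k | l) <;> simp [X, Matrix.one_apply]
      rw [Matrix.mul_apply, row, ← Matrix.mul_apply, one_mul]
      rcases c with k | l
      exacts [rfl, Y_inr _ _]
  have hdet := congrArg Matrix.det hXY
  rw [Matrix.det_mul, Matrix.det_permute, Matrix.det_fromBlocks_zero₂₁,
    Matrix.det_fromBlocks_zero₂₁, Matrix.det_fromBlocks_zero₁₂] at hdet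
  simp only [Matrix.det_one, Matrix.det_transpose, one_mul, mul_one] at hdet
  rw [← hdet]
  ring

theorem det_submatrix_mul_diagonal (A : Matrix I J R) (w : J → R) (e : I → J) :
    ((A * Matrix.diagonal w).submatrix id e).det = (A.submatrix id e).det * ∏ k, w (e k) := by
  rw [mul_comm, ← Matrix.det_mul_row]
  exact congrArg _ (Matrix.ext fun i k => by simp [Matrix.mul_diagonal, mul_comm])

end LinearAlgebra

section TwistedWronskian

open Polynomial Lagrange

/-- The Wronskian `f g' - f' g` of `f` and `x ^ α g`, with the factor `x ^ (α - 1)` removed. -/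
def twistedWronskian {R : Type*} [CommRing R] (α : R) (f g : R[X]) : R[X] :=
  C α * (f * g) + X * wronskian f g

variable {R : Type*} [CommRing R]

theorem natDegree_twistedWronskian_le (α : R) (f g : R[X]) :
    (twistedWronskian α f g).natDegree ≤ f.natDegree + g.natDegree := by
  have natDegree_X_mul (p q : R[X]) :
      (X * (p * derivative q)).natDegree ≤ p.natDegree + q.natDegree := by
    by_cases hq : q.natDegree = 0
    · simp [derivative_of_natDegree_zero hq]
    · have := natDegree_derivative_lt hq
      have := natDegree_mul_le (p := p) (q := derivative q)
      have := natDegree_mul_le (p := X) (q := p * derivative q)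
      have := natDegree_X_le (R := R)
      omega
  rw [twistedWronskian, wronskian, mul_sub, mul_comm (derivative f)]
  exact natDegree_add_le_of_degree_le ((natDegree_C_mul_le _ _).trans natDegree_mul_le)
    ((natDegree_sub_le _ _).trans (max_le (natDegree_X_mul f g)
      (add_comm f.natDegree _ ▸ natDegree_X_mul g f)))

theorem twistedWronskian_swap (α : R) (f g : R[X]) :
    twistedWronskian (-α) g f = -twistedWronskian α f g := by
  simp only [twistedWronskian, wronskian, C_neg]
  ring

theorem twistedWronskian_X_sub_C_mul (α a b : R) (g h : R[X]) :
    twistedWronskian α ((X - C a) * g) ((X - C b) * h) =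
      (X - C a) * (X - C b) * twistedWronskian α g h + C (b - a) * X * (g * h) := by
  simp only [twistedWronskian, wronskian, derivative_mul, derivative_sub, derivative_X,
    derivative_C, C_sub]
  ring

variable {K : Type*} [Field K]

theorem sum_nodalWeight_mul_eval_eq_zero {ι : Type*} [DecidableEq ι] {s : Finset ι} {v : ι → K}
    (hv : Set.InjOn v s) {p : K[X]} (hp : p.natDegree + 1 < s.card) :
    ∑ c ∈ s, nodalWeight s v c * p.eval (v c) = 0 := by
  have hdeg : p.degree < s.card :=
    degree_le_natDegree.trans_lt (Nat.cast_lt.2 (by omega))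
  rw [← coeff_eq_zero_of_natDegree_lt (p := p) (n := s.card - 1) (by omega),
    coeff_eq_sum hv hdeg]
  refine Finset.sum_congr rfl fun c _ => ?_
  rw [nodalWeight, Finset.prod_inv_distrib, div_eq_inv_mul]

variable {I J : Type*} [Fintype I] [Fintype J] {α β : K} {t : I → K} {tt : J → K}

theorem ne_of_twistedWronskian_eq {L : Type*} [Fintype L] {ζ : L → K} (hβ : β ≠ 0)
    (htζ : ∀ i c, t i ≠ ζ c)
    (hW : twistedWronskian α (nodal univ t) (nodal univ tt) = C β * nodal univ ζ) (i : I) (j : J) :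
    t i ≠ tt j := by
  intro hij
  have hWi := congrArg (eval (t i)) hW
  have ht : eval (t i) (nodal univ t) = 0 := eval_nodal_at_node (mem_univ i)
  have htt : eval (t i) (nodal univ tt) = 0 := hij ▸ eval_nodal_at_node (mem_univ j)
  simp only [twistedWronskian, wronskian, eval_add, eval_mul, eval_sub, eval_C, ht, htt, mul_zero,
    zero_mul, sub_zero, add_zero] at hWi
  exact mul_ne_zero hβ (eval_nodal_not_at_node fun c _ => htζ i c) hWi.symm

/-- The residue of `y(x) ỹ(x) / ∏ (x - ζ c)` at `x = ζ c`, where `y` and `ỹ` have roots `t`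
and `tt`. -/
def dualWeight {K I J L : Type*} [Field K] [Fintype I] [Fintype J] [Fintype L] [DecidableEq L]
    (t : I → K) (tt : J → K) (ζ : L → K) (c : L) : K :=
  nodalWeight univ ζ c * (eval (ζ c) (nodal univ t) * eval (ζ c) (nodal univ tt))

variable [DecidableEq I] [DecidableEq J] {ζ : I ⊕ J → K}

theorem dualWeight_ne_zero (hζ : Function.Injective ζ) (htζ : ∀ i c, t i ≠ ζ c)
    (httζ : ∀ j c, tt j ≠ ζ c) (c : I ⊕ J) : dualWeight t tt ζ c ≠ 0 :=
  mul_ne_zero (nodalWeight_ne_zero hζ.injOn (mem_univ c)) <|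
    mul_ne_zero (eval_nodal_not_at_node fun i _ => (htζ i c).symm)
      (eval_nodal_not_at_node fun j _ => (httζ j c).symm)

theorem natDegree_nodal_erase_add_one {I : Type*} [Fintype I] [DecidableEq I] (t : I → K) (i : I) :
    (nodal (univ.erase i) t).natDegree + 1 = Fintype.card I := by
  rw [natDegree_nodal]
  exact Finset.card_erase_add_one (mem_univ i)

theorem cauchyMatrix_mul_dualWeight_mul_transpose (hζ : Function.Injective ζ)
    (htζ : ∀ i c, t i ≠ ζ c) (httζ : ∀ j c, tt j ≠ ζ c) :
    cauchyMatrix t ζ * Matrix.diagonal (dualWeight t tt ζ) * (cauchyMatrix tt ζ).transpose = 0 := by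
  ext i j
  have hdeg : (nodal (univ.erase i) t * nodal (univ.erase j) tt).natDegree + 1 <
      (univ : Finset (I ⊕ J)).card := by
    have := natDegree_nodal_erase_add_one t i
    have := natDegree_nodal_erase_add_one tt j
    have := natDegree_mul_le (p := nodal (univ.erase i) t) (q := nodal (univ.erase j) tt)
    rw [Finset.card_univ, Fintype.card_sum]
    omega
  rw [Matrix.mul_apply, Matrix.zero_apply, ← sum_nodalWeight_mul_eval_eq_zero hζ.injOn hdeg]
  refine Finset.sum_congr rfl fun c _ => ?_
  have := sub_ne_zero.2 (htζ i c)
  have := sub_ne_zero.2 (httζ j c)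
  rw [Matrix.mul_diagonal, Matrix.transpose_apply, cauchyMatrix, cauchyMatrix, Matrix.of_apply,
    Matrix.of_apply, dualWeight, nodal_eq_mul_nodal_erase (v := t) (mem_univ i),
    nodal_eq_mul_nodal_erase (v := tt) (mem_univ j)]
  simp only [eval_mul, eval_sub, eval_X, eval_C]
  rw [← neg_sub (t i), ← neg_sub (tt j)]
  field_simp

/- Dividing `y` and `ỹ` by `x - t i` and `x - tt j` changes their twisted Wronskian by the multiple
`(tt j - t i) x` of the product of the quotients, up to a factor vanishing at `ζ c`. So the entry
`(i, j)` is a sum of residues of a polynomial of small degree over `∏ (x - ζ c)`. -/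
theorem cauchyMatrix_sq_mul_dualWeight_mul_transpose (hβ : β ≠ 0) (hζ : Function.Injective ζ)
    (htζ : ∀ i c, t i ≠ ζ c) (httζ : ∀ j c, tt j ≠ ζ c)
    (hW : twistedWronskian α (nodal univ t) (nodal univ tt) = C β * nodal univ ζ) :
    (cauchyMatrix t ζ).map (· ^ 2) * Matrix.diagonal (fun c => ζ c * dualWeight t tt ζ c) *
      ((cauchyMatrix tt ζ).map (· ^ 2)).transpose = 0 := by
  ext i j
  set f := nodal (univ.erase i) t with hf
  set g := nodal (univ.erase j) tt with hg
  have hdeg : (twistedWronskian α f g).natDegree + 1 < (univ : Finset (I ⊕ J)).card := by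
    have : f.natDegree + 1 = _ := natDegree_nodal_erase_add_one t i
    have : g.natDegree + 1 = _ := natDegree_nodal_erase_add_one tt j
    have := natDegree_twistedWronskian_le α f g
    rw [Finset.card_univ, Fintype.card_sum]
    omega
  have htt := sub_ne_zero.2 (ne_of_twistedWronskian_eq hβ htζ hW i j)
  have orth := sum_nodalWeight_mul_eval_eq_zero hζ.injOn hdeg
  rw [← mul_eq_zero_iff_left (inv_ne_zero htt), Finset.mul_sum] at orth
  rw [Matrix.mul_apply, Matrix.zero_apply, ← orth]
  refine Finset.sum_congr rfl fun c _ => ?_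
  have := sub_ne_zero.2 (htζ i c)
  have := sub_ne_zero.2 (httζ j c)
  have hWc := congrArg (eval (ζ c)) hW
  rw [nodal_eq_mul_nodal_erase (v := t) (mem_univ i),
    nodal_eq_mul_nodal_erase (v := tt) (mem_univ j), twistedWronskian_X_sub_C_mul,
    eval_mul (p := C β), eval_nodal_at_node (mem_univ c), mul_zero] at hWc
  rw [Matrix.mul_diagonal, Matrix.transpose_apply, Matrix.map_apply, Matrix.map_apply,
    cauchyMatrix, cauchyMatrix, Matrix.of_apply, Matrix.of_apply, dualWeight,
    nodal_eq_mul_nodal_erase (v := t) (mem_univ i), nodal_eq_mul_nodal_erase (v := tt) (mem_univ j)]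
  simp only [← hf, ← hg, eval_mul, eval_sub, eval_X, eval_C, eval_add] at hWc ⊢
  field_simp
  linear_combination (-1 : K) * nodalWeight univ ζ c * (t i - ζ c) * (tt j - ζ c) * hWc

theorem permanent_mul_permanent_swap_one (hβ : β ≠ 0) (ht : Function.Injective t)
    (htt : Function.Injective tt) (hζ : Function.Injective ζ)
    (htζ : ∀ i c, t i ≠ ζ c) (httζ : ∀ j c, tt j ≠ ζ c)
    (hW : twistedWronskian α (nodal univ t) (nodal univ tt) = C β * nodal univ ζ)
    (π : Equiv.Perm (I ⊕ J)) :
    (cauchyMatrix t (ζ ∘ π ∘ Sum.inl)).permanent * (∏ k, ζ (π (Sum.inl k))) *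
        (cauchyMatrix tt (ζ ∘ Sum.inr)).permanent =
      (cauchyMatrix t (ζ ∘ Sum.inl)).permanent * (∏ k, ζ (Sum.inl k)) *
        (cauchyMatrix tt (ζ ∘ π ∘ Sum.inr)).permanent := by
  have plucker := det_minor_mul_det_complementary_minor
    (cauchyMatrix_mul_dualWeight_mul_transpose hζ htζ httζ) π
  have plucker_sq := det_minor_mul_det_complementary_minor
    (cauchyMatrix_sq_mul_dualWeight_mul_transpose hβ hζ htζ httζ hW) π
  rw [det_submatrix_mul_diagonal, det_submatrix_mul_diagonal] at plucker plucker_sq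
  have hinl : Function.Injective (ζ ∘ Sum.inl : I → K) := hζ.comp Sum.inl_injective
  have hinr : Function.Injective (ζ ∘ Sum.inr : J → K) := hζ.comp Sum.inr_injective
  have hπinl : Function.Injective (ζ ∘ π ∘ Sum.inl : I → K) :=
    hζ.comp (π.injective.comp Sum.inl_injective)
  have hπinr : Function.Injective (ζ ∘ π ∘ Sum.inr : J → K) :=
    hζ.comp (π.injective.comp Sum.inr_injective)
  have borchardt_t {e : I → I ⊕ J} (he : Function.Injective (ζ ∘ e)) :=
    borchardt he fun i k => htζ i (e k)
  have borchardt_tt {e : J → I ⊕ J} (he : Function.Injective (ζ ∘ e)) :=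
    borchardt he fun i k => httζ i (e k)
  have hdet := mul_ne_zero (mul_ne_zero (det_cauchyMatrix_ne_zero ht hinl fun i _ => htζ i _)
    (Finset.prod_ne_zero_iff.2 fun (k : I) (_ : k ∈ univ) =>
      dualWeight_ne_zero hζ htζ httζ (Sum.inl k)))
    (det_cauchyMatrix_ne_zero htt hπinr fun i _ => httζ i _)
  rw [Matrix.submatrix_map, Matrix.submatrix_map, Matrix.submatrix_map, Matrix.submatrix_map]
    at plucker_sq
  have sub_t (e : I → I ⊕ J) : (cauchyMatrix t ζ).submatrix id e = cauchyMatrix t (ζ ∘ e) := rfl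
  have sub_tt (e : J → I ⊕ J) : (cauchyMatrix tt ζ).submatrix id e = cauchyMatrix tt (ζ ∘ e) := rfl
  simp only [sub_t, sub_tt, Finset.prod_mul_distrib, Function.comp_apply, ← borchardt_t hinl,
    ← borchardt_t hπinl, ← borchardt_tt hinr, ← borchardt_tt hπinr] at plucker plucker_sq
  refine mul_left_cancel₀ hdet ?_
  linear_combination plucker_sq - (cauchyMatrix t (ζ ∘ π ∘ Sum.inl)).permanent *
    (∏ k, ζ (π (Sum.inl k))) * (cauchyMatrix tt (ζ ∘ Sum.inr)).permanent * plucker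

theorem permanent_mul_permanent_swap_of_injective (hβ : β ≠ 0) (ht : Function.Injective t)
    (htt : Function.Injective tt) (hζ : Function.Injective ζ)
    (htζ : ∀ i c, t i ≠ ζ c) (httζ : ∀ j c, tt j ≠ ζ c)
    (hW : twistedWronskian α (nodal univ t) (nodal univ tt) = C β * nodal univ ζ)
    (π π₀ : Equiv.Perm (I ⊕ J)) :
    (cauchyMatrix t (ζ ∘ π ∘ Sum.inl)).permanent * (∏ k, ζ (π (Sum.inl k))) *
        (cauchyMatrix tt (ζ ∘ π₀ ∘ Sum.inr)).permanent =
      (cauchyMatrix t (ζ ∘ π₀ ∘ Sum.inl)).permanent * (∏ k, ζ (π₀ (Sum.inl k))) *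
        (cauchyMatrix tt (ζ ∘ π ∘ Sum.inr)).permanent := by
  have hperm : nodal univ (ζ ∘ π₀) = nodal univ ζ := Equiv.prod_comp π₀ fun c => X - C (ζ c)
  have := permanent_mul_permanent_swap_one hβ ht htt (hζ.comp π₀.injective)
    (fun i _ => htζ i _) (fun j _ => httζ j _) (hperm ▸ hW) (π₀⁻¹ * π)
  simpa [Function.comp_def] using this

end TwistedWronskian

section RootsOfPolynomialFamilies

open Polynomial Lagrange Filter Topology

theorem finite_setOf_not_separable_sub_C_mul {K : Type*} [Field K] [IsAlgClosed K] {Q R : K[X]}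
    (hQ : derivative Q ≠ 0) (hQR : IsCoprime Q R) : {ε | ¬(Q - C ε * R).Separable}.Finite := by
  have hD : wronskian Q R ≠ 0 := fun h => hQ (hQR.wronskian_eq_zero_iff.1 h).1
  refine ((finite_setOfPred_isRoot hD).image fun x => Q.eval x / R.eval x).subset fun ε hε => ?_
  rw [Set.mem_ofPred_eq, Separable, isCoprime_iff_aeval_ne_zero_of_isAlgClosed K (k := K)] at hε
  push Not at hε
  obtain ⟨x, hx, hx'⟩ := hε
  simp only [derivative_sub, derivative_mul, derivative_C, zero_mul, zero_add, coe_aeval_eq_eval,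
    eval_sub, eval_mul, eval_C] at hx hx'
  have hR : R.eval x ≠ 0 := fun h =>
    ((isCoprime_iff_aeval_ne_zero_of_isAlgClosed K (k := K) Q R).1 hQR x).elim
      (fun hQx => hQx (by simpa [h] using hx)) fun hRx => hRx (by simpa using h)
  refine ⟨x, ?_, ?_⟩
  · rw [Set.mem_ofPred_eq, IsRoot.def, wronskian, eval_sub, eval_mul, eval_mul]
    linear_combination (derivative R).eval x * hx - R.eval x * hx'
  · rw [div_eq_iff hR]
    linear_combination hx

theorem exists_perm_of_multiset_map_eq {L S : Type*} [Fintype L] {f g : L → S}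
    (h : (univ : Finset L).val.map f = univ.val.map g) : ∃ σ : Equiv.Perm L, f = g ∘ σ := by
  classical
  have fiberEquiv (s : S) : Nonempty ({a // f a = s} ≃ {a // g a = s}) := by
    refine ⟨Fintype.equivOfCardEq ?_⟩
    have := congrArg (Multiset.count s) h
    rw [Multiset.count_map, Multiset.count_map] at this
    simpa only [Fintype.card_subtype, Finset.card_def, Finset.filter_val, eq_comm] using this
  let e (s : S) := (fiberEquiv s).some
  refine ⟨(Equiv.sigmaFiberEquiv f).symm.trans
    ((Equiv.sigmaCongrRight e).trans (Equiv.sigmaFiberEquiv g)), ?_⟩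
  ext a
  exact (e (f a) ⟨a, rfl⟩).2.symm

theorem roots_nodal_univ {K L : Type*} [Field K] [Fintype L] (ζ : L → K) :
    (nodal univ ζ).roots = univ.val.map ζ := by
  rw [nodal, Finset.prod_eq_multiset_prod, ← Function.comp_def (fun a => X - C a) ζ,
    ← Multiset.map_map, roots_multiset_prod_X_sub_C]

theorem exists_perm_of_nodal_eq {K L : Type*} [Field K] [Fintype L] {ζ ξ : L → K}
    (h : nodal univ ζ = nodal univ ξ) : ∃ σ : Equiv.Perm L, ζ = ξ ∘ σ :=
  exists_perm_of_multiset_map_eq <| by rw [← roots_nodal_univ, h, roots_nodal_univ]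

theorem exists_nodal_eq {K L : Type*} [Field K] [IsAlgClosed K] [Fintype L] {p : K[X]}
    (hp : p.Monic) (hdeg : p.natDegree = Fintype.card L) : ∃ ζ : L → K, nodal univ ζ = p := by
  have hsplits := IsAlgClosed.splits p
  have hlen : Fintype.card L = p.roots.toList.length := by
    rw [Multiset.length_toList, ← hsplits.natDegree_eq_card_roots, hdeg]
  refine ⟨p.roots.toList.get ∘ (Fintype.equivFinOfCardEq hlen), ?_⟩
  rw [nodal, Function.comp_def, Equiv.prod_comp (Fintype.equivFinOfCardEq hlen)
    fun k => X - C (p.roots.toList.get k), ← List.prod_ofFn]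
  conv_rhs => rw [hsplits.eq_prod_roots_of_monic hp, ← Multiset.coe_toList p.roots,
    Multiset.map_coe, Multiset.prod_coe]
  congr 1
  apply List.ext_getElem <;> simp

theorem tendsto_eval_of_tendsto_coeff {E : Type*} {F : Filter E} {p : E → ℂ[X]} {q : ℂ[X]} {d : ℕ}
    (hp : ∀ e, (p e).natDegree = d) (hq : q.natDegree = d)
    (h : ∀ k, Tendsto (fun e => (p e).coeff k) F (𝓝 (q.coeff k))) (x : ℂ) :
    Tendsto (fun e => (p e).eval x) F (𝓝 (q.eval x)) := by
  simp only [eval_eq_sum_range, hp, hq]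
  exact tendsto_finsetSum _ fun k _ => (h k).mul_const _

theorem eventually_cauchyBound_le {E : Type*} {F : Filter E} {p : E → ℂ[X]} {q : ℂ[X]} {d : ℕ}
    (hmonic : ∀ e, (p e).Monic) (hdeg : ∀ e, (p e).natDegree = d)
    (h : ∀ k, Tendsto (fun e => (p e).coeff k) F (𝓝 (q.coeff k))) :
    ∃ B, ∀ᶠ e in F, cauchyBound (p e) ≤ B := by
  refine ⟨(range d).sup (fun k => ‖q.coeff k‖₊ + 1) + 1, ?_⟩
  have hcoeff : ∀ᶠ e in F, ∀ k ∈ range d, ‖(p e).coeff k‖₊ < ‖q.coeff k‖₊ + 1 :=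
    (eventually_all_finset _).2 fun k _ => (h k).nnnorm.eventually_lt_const (lt_add_one _)
  filter_upwards [hcoeff] with e he
  rw [cauchyBound, hmonic e, nnnorm_one, div_one, hdeg e]
  exact add_le_add_left (Finset.sup_mono_fun fun k hk => (he k hk).le) 1

theorem eventually_exists_nodal_eq {E L : Type*} [Fintype L] {F : Filter E} {p : E → ℂ[X]}
    {ζ : L → ℂ} (hmonic : ∀ e, (p e).Monic) (hdeg : ∀ e, (p e).natDegree = Fintype.card L)
    (hp : ∀ k, Tendsto (fun e => (p e).coeff k) F (𝓝 ((nodal univ ζ).coeff k)))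
    {U : Set (L → ℂ)} (hU : U ∈ 𝓝 ζ) : ∀ᶠ e in F, ∃ ξ ∈ U, nodal univ ξ = p e := by
  refine mem_iff_ultrafilter.2 fun G hG => ?_
  choose Z hZ using fun e => exists_nodal_eq (L := L) (hmonic e) (hdeg e)
  obtain ⟨B, hB⟩ := eventually_cauchyBound_le hmonic hdeg fun k => (hp k).mono_left hG
  have bound : ∀ᶠ e in (G : Filter E), Z e ∈ Metric.closedBall 0 (B : ℝ) := by
    filter_upwards [hB] with e he
    rw [mem_closedBall_zero_iff, pi_norm_le_iff_of_nonneg B.coe_nonneg]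
    intro c
    have hroot : (p e).IsRoot (Z e c) := hZ e ▸ eval_nodal_at_node (mem_univ c)
    exact (hroot.norm_lt_cauchyBound (hmonic e).ne_zero).le.trans he
  obtain ⟨ξ, -, hξ⟩ := (isCompact_closedBall (0 : L → ℂ) B).ultrafilter_le_nhds
    (G.map Z) (le_principal_iff.2 bound)
  have hξζ : nodal univ ξ = nodal univ ζ := Polynomial.funext fun x => by
    refine tendsto_nhds_unique (f := fun e => (nodal univ (Z e)).eval x) (l := (G : Filter E)) ?_ ?_
    · simp only [eval_nodal]
      exact tendsto_finsetProd _ fun c _ => tendsto_const_nhds.sub (tendsto_pi_nhds.1 hξ c)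
    · simp only [hZ]
      exact tendsto_eval_of_tendsto_coeff hdeg (natDegree_nodal) (fun k => (hp k).mono_left hG) x
  obtain ⟨σ, rfl⟩ := exists_perm_of_nodal_eq hξζ.symm
  have hσ : Tendsto (fun e => Z e ∘ σ) G (𝓝 (ξ ∘ σ)) :=
    ((continuous_pi fun c => continuous_apply (σ c)).tendsto ξ).comp hξ
  filter_upwards [hσ hU] with e he
  exact ⟨_, he, (Equiv.prod_comp σ fun c => X - C (Z e c)).trans (hZ e)⟩

variable {J : Type*} [Fintype J] [DecidableEq J]

theorem twistedWronskian_nodal_update {K : Type*} [Field K] (α : K) (y : K[X]) (tt : J → K) (j : J)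
    (δ : K) :
    twistedWronskian α y (nodal univ (Function.update tt j (tt j + δ))) =
      twistedWronskian α y (nodal univ tt) -
        C δ * twistedWronskian α y (nodal (univ.erase j) tt) := by
  have herase : nodal (univ.erase j) (Function.update tt j (tt j + δ)) =
      nodal (univ.erase j) tt :=
    Finset.prod_congr rfl fun k hk => by rw [Function.update_of_ne (Finset.ne_of_mem_erase hk)]
  rw [nodal_eq_mul_nodal_erase (mem_univ j), nodal_eq_mul_nodal_erase (v := tt) (mem_univ j),
    herase, Function.update_self]
  simp only [twistedWronskian, wronskian, derivative_mul, derivative_sub, derivative_X,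
    derivative_C, C_add, derivative_add]
  ring

theorem isCoprime_nodal_twistedWronskian_erase {K I L : Type*} [Field K] [Fintype I] [Fintype L]
    {α β : K} {t : I → K} {tt : J → K} {ζ : L → K} (hζ : ∀ c, ζ c ≠ 0) (htζ : ∀ i c, t i ≠ ζ c)
    (httζ : ∀ j c, tt j ≠ ζ c)
    (hW : twistedWronskian α (nodal univ t) (nodal univ tt) = C β * nodal univ ζ) (j : J) :
    IsCoprime (nodal univ ζ) (twistedWronskian α (nodal univ t) (nodal (univ.erase j) tt)) := by
  refine IsCoprime.prod_left fun c _ => ?_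
  rw [(irreducible_X_sub_C (ζ c)).coprime_iff_not_dvd, dvd_iff_isRoot, IsRoot.def]
  intro hroot
  set y := nodal univ t
  set h := nodal (univ.erase j) tt
  have ht : eval (ζ c) y ≠ 0 := eval_nodal_not_at_node fun i _ => (htζ i c).symm
  have htt : eval (ζ c) h ≠ 0 := eval_nodal_not_at_node fun i _ => (httζ i c).symm
  have hmul : twistedWronskian α y ((X - C (tt j)) * h) =
      (X - C (tt j)) * twistedWronskian α y h + X * (y * h) := by
    simp only [twistedWronskian, wronskian, derivative_mul, derivative_sub, derivative_X,
      derivative_C]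
    ring
  have hWc := congrArg (eval (ζ c)) hW
  rw [nodal_eq_mul_nodal_erase (v := tt) (mem_univ j), hmul, eval_add, eval_mul, hroot, mul_zero,
    zero_add, eval_mul (p := C β), eval_nodal_at_node (mem_univ c), mul_zero, eval_mul, eval_X,
    eval_mul] at hWc
  exact mul_ne_zero (hζ c) (mul_ne_zero ht htt) hWc

variable {I : Type*} [Fintype I] {α β : ℂ} {t : I → ℂ} {tt : J → ℂ} {ζ : I ⊕ J → ℂ}

theorem natDegree_twistedWronskian_nodal_erase_lt (α : ℂ) (t : I → ℂ) (tt : J → ℂ) (j : J) :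
    (twistedWronskian α (nodal univ t) (nodal (univ.erase j) tt)).natDegree <
      Fintype.card (I ⊕ J) := by
  have hle := natDegree_twistedWronskian_le α (nodal univ t) (nodal (univ.erase j) tt)
  have herase := natDegree_nodal_erase_add_one tt j
  rw [natDegree_nodal (v := t), Finset.card_univ] at hle
  rw [Fintype.card_sum]
  omega

/- Moving one root of `ỹ` moves the Wronskian in a pencil `Q - ε R` with `Q` and `R` coprime, and
such a pencil is separable for all but finitely many `ε`. -/
theorem frequently_injective_twistedWronskian_eq {J : Type*} [Fintype J] [Nonempty J]
    {tt : J → ℂ} {ζ : I ⊕ J → ℂ} (hζ : ∀ c, ζ c ≠ 0)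
    (htζ : ∀ i c, t i ≠ ζ c) (httζ : ∀ j c, tt j ≠ ζ c)
    (hW : twistedWronskian α (nodal univ t) (nodal univ tt) = C β * nodal univ ζ) :
    ∃ᶠ q : (J → ℂ) × (I ⊕ J → ℂ) in 𝓝 (tt, ζ), Function.Injective q.2 ∧
      twistedWronskian α (nodal univ t) (nodal univ q.1) = C β * nodal univ q.2 := by
  classical
  obtain ⟨j⟩ := ‹Nonempty J›
  set R := twistedWronskian α (nodal univ t) (nodal (univ.erase j) tt) with hR
  let p (ε : ℂ) := nodal univ ζ - C ε * R
  let tε (ε : ℂ) := Function.update tt j (tt j + β * ε)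
  have hWε (ε : ℂ) : twistedWronskian α (nodal univ t) (nodal univ (tε ε)) = C β * p ε := by
    rw [twistedWronskian_nodal_update, hW, ← hR, C_mul]
    ring
  have hdegR (ε : ℂ) : (C ε * R).natDegree < (nodal univ ζ).natDegree := by
    rw [natDegree_nodal, Finset.card_univ]
    exact (natDegree_C_mul_le ε R).trans_lt (natDegree_twistedWronskian_nodal_erase_lt α t tt j)
  have hmonic (ε : ℂ) : (p ε).Monic :=
    nodal_monic.sub_of_left (degree_lt_degree (hdegR ε))
  have hdeg (ε : ℂ) : (p ε).natDegree = Fintype.card (I ⊕ J) := by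
    rw [natDegree_sub_eq_left_of_natDegree_lt (hdegR ε), natDegree_nodal, Finset.card_univ]
  have hcoeff (k : ℕ) : Tendsto (fun ε => (p ε).coeff k) (𝓝 0) (𝓝 ((nodal univ ζ).coeff k)) := by
    have : Continuous fun ε : ℂ => (p ε).coeff k := by
      simp only [p, coeff_sub, coeff_C_mul]
      fun_prop
    simpa [p] using this.tendsto 0
  have htε : Tendsto tε (𝓝 0) (𝓝 tt) := by
    have : Continuous tε := by fun_prop
    simpa [tε] using this.tendsto 0
  have hderiv : derivative (nodal univ ζ) ≠ 0 := fun h =>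
    (hdegR 0).ne_bot (derivative_eq_zero.1 h)
  have hsep : ∀ᶠ ε in 𝓝[≠] (0 : ℂ), (p ε).Separable := nhdsNE_le_cofinite _ <|
    Filter.mem_cofinite.2 <| finite_setOf_not_separable_sub_C_mul hderiv
      (isCoprime_nodal_twistedWronskian_erase hζ htζ httζ hW j)
  rw [nhds_prod_eq, (nhds_basis_opens' tt).prod (nhds_basis_opens' ζ) |>.frequently_iff]
  rintro ⟨U, V⟩ ⟨⟨hU, -⟩, hV, -⟩
  have hεU : ∀ᶠ ε in 𝓝 0, tε ε ∈ U := htε hU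
  have hεV := eventually_exists_nodal_eq hmonic hdeg hcoeff hV
  obtain ⟨ε, ⟨hεU, ξ, hξV, hξ⟩, hε⟩ :=
    (((hεU.and hεV).filter_mono nhdsWithin_le_nhds).and hsep).exists
  refine ⟨(tε ε, ξ), ⟨hεU, hξV⟩, ?_, (hWε ε).trans (by rw [hξ])⟩
  exact separable_prod_X_sub_C_iff.1 (show (nodal univ ξ).Separable from hξ ▸ hε)

theorem eventually_nhds_injective {L : Type*} [Finite L] {f : L → ℂ} (hf : Function.Injective f) :
    ∀ᶠ g in 𝓝 f, Function.Injective g := by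
  have (c d : L) : ∀ᶠ g in 𝓝 f, g c = g d → c = d := by
    by_cases hcd : c = d
    · simp [hcd]
    · filter_upwards [((continuous_apply c).continuousAt.sub
        (continuous_apply d).continuousAt).eventually_ne (sub_ne_zero.2 (hf.ne hcd))] with g hg h
      exact absurd (sub_eq_zero.2 h) hg
  exact (eventually_all.2 fun c => eventually_all.2 (this c)).mono fun g hg c d => hg c d

theorem eventually_nhds_forall_ne {J L : Type*} [Finite J] [Finite L] {f : J → ℂ} {g : L → ℂ}
    (h : ∀ j c, f j ≠ g c) : ∀ᶠ q : (J → ℂ) × (L → ℂ) in 𝓝 (f, g), ∀ j c, q.1 j ≠ q.2 c := by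
  refine eventually_all.2 fun j => eventually_all.2 fun c => ?_
  have hcont : Continuous fun q : (J → ℂ) × (L → ℂ) => q.1 j - q.2 c := by fun_prop
  exact (hcont.continuousAt.eventually_ne (sub_ne_zero.2 (h j c))).mono fun q => sub_ne_zero.1

theorem continuousAt_permanent_cauchyMatrix {E J : Type*} [TopologicalSpace E] [Fintype J]
    [DecidableEq J] {f g : E → J → ℂ} {e : E} (hf : ContinuousAt f e) (hg : ContinuousAt g e)
    (h : ∀ i j, f e i ≠ g e j) :
    ContinuousAt (fun x => (cauchyMatrix (f x) (g x)).permanent) e := by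
  refine tendsto_finsetSum _ fun σ _ => tendsto_finsetProd _ fun i _ => ?_
  exact ((tendsto_pi_nhds.1 hf (σ i)).sub (tendsto_pi_nhds.1 hg i)).inv₀ (sub_ne_zero.2 (h _ _))

variable [DecidableEq I]

theorem permanent_mul_permanent_swap_of_isEmpty [IsEmpty J] (π π₀ : Equiv.Perm (I ⊕ J)) :
    (cauchyMatrix t (ζ ∘ π ∘ Sum.inl)).permanent * (∏ k, ζ (π (Sum.inl k))) *
        (cauchyMatrix tt (ζ ∘ π₀ ∘ Sum.inr)).permanent =
      (cauchyMatrix t (ζ ∘ π₀ ∘ Sum.inl)).permanent * (∏ k, ζ (π₀ (Sum.inl k))) *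
        (cauchyMatrix tt (ζ ∘ π ∘ Sum.inr)).permanent := by
  let ρ (π : Equiv.Perm (I ⊕ J)) : Equiv.Perm I :=
    (Equiv.sumEmpty I J).permCongr π
  have hρ (π : Equiv.Perm (I ⊕ J)) : π ∘ Sum.inl = Sum.inl ∘ ρ π := funext fun k => by
    apply (Equiv.sumEmpty I J).injective
    simp [ρ]
  have permanent_eq (π : Equiv.Perm (I ⊕ J)) :
      (cauchyMatrix t (ζ ∘ π ∘ Sum.inl)).permanent = (cauchyMatrix t (ζ ∘ Sum.inl)).permanent := by
    rw [hρ]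
    exact Matrix.permanent_permute_rows (ρ π) (cauchyMatrix t (ζ ∘ Sum.inl))
  have prod_eq (π : Equiv.Perm (I ⊕ J)) :
      ∏ k, ζ (π (Sum.inl k)) = ∏ k, ζ (Sum.inl k) :=
    (Fintype.prod_congr _ _ fun k => congrArg ζ (congrFun (hρ π) k)).trans
      (Equiv.prod_comp (ρ π) fun k => ζ (Sum.inl k))
  rw [permanent_eq, permanent_eq, prod_eq, prod_eq,
    Subsingleton.elim (ζ ∘ π ∘ Sum.inr) (ζ ∘ π₀ ∘ Sum.inr)]

theorem permanent_mul_permanent_swap (hβ : β ≠ 0) (hζ : ∀ c, ζ c ≠ 0) (ht : Function.Injective t)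
    (htt : Function.Injective tt) (htζ : ∀ i c, t i ≠ ζ c) (httζ : ∀ j c, tt j ≠ ζ c)
    (hW : twistedWronskian α (nodal univ t) (nodal univ tt) = C β * nodal univ ζ)
    (π π₀ : Equiv.Perm (I ⊕ J)) :
    (cauchyMatrix t (ζ ∘ π ∘ Sum.inl)).permanent * (∏ k, ζ (π (Sum.inl k))) *
        (cauchyMatrix tt (ζ ∘ π₀ ∘ Sum.inr)).permanent =
      (cauchyMatrix t (ζ ∘ π₀ ∘ Sum.inl)).permanent * (∏ k, ζ (π₀ (Sum.inl k))) *
        (cauchyMatrix tt (ζ ∘ π ∘ Sum.inr)).permanent := by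
  rcases isEmpty_or_nonempty J with hJ | hJ
  · exact permanent_mul_permanent_swap_of_isEmpty π π₀
  let side (q : (J → ℂ) × (I ⊕ J → ℂ)) (π π₀ : Equiv.Perm (I ⊕ J)) : ℂ :=
    (cauchyMatrix t (q.2 ∘ π ∘ Sum.inl)).permanent * (∏ k, q.2 (π (Sum.inl k))) *
      (cauchyMatrix q.1 (q.2 ∘ π₀ ∘ Sum.inr)).permanent
  have hside (π π₀ : Equiv.Perm (I ⊕ J)) : ContinuousAt (side · π π₀) (tt, ζ) := by
    refine ((continuousAt_permanent_cauchyMatrix continuousAt_const ?_ fun i k => htζ i _).mul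
      ?_).mul (continuousAt_permanent_cauchyMatrix continuousAt_fst ?_ fun j k => httζ j _)
    · exact continuousAt_pi.2 fun k => by fun_prop
    · fun_prop
    · exact continuousAt_pi.2 fun k => by fun_prop
  by_contra hne
  have hne : ∀ᶠ q in 𝓝 (tt, ζ), side q π π₀ ≠ side q π₀ π := by
    filter_upwards [((hside π π₀).sub (hside π₀ π)).eventually_ne (sub_ne_zero.2 hne)] with q
    exact sub_ne_zero.1
  obtain ⟨q, ⟨hq, hWq⟩, hqtt, hqt, hqttζ, hneq⟩ :=
    ((frequently_injective_twistedWronskian_eq hζ htζ httζ hW).and_eventually <|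
      (continuousAt_fst.eventually (eventually_nhds_injective htt)).and <|
      ((continuousAt_const.prodMk continuousAt_snd).eventually
        (eventually_nhds_forall_ne htζ)).and <| (eventually_nhds_forall_ne httζ).and hne).exists
  exact hneq (permanent_mul_permanent_swap_of_injective hβ ht hqtt hq hqt hqttζ hWq π π₀)

end RootsOfPolynomialFamilies

section Colourings

variable {I J S R : Type*} [Fintype I] [Fintype J] [CommSemiring R]

/-- The content of a colouring `f`: the number of times each colour is used. -/
def colourCount (f : I → S) : S →₀ ℕ := ∑ i, Finsupp.single (f i) 1

theorem colourCount_apply [DecidableEq S] (f : I → S) (s : S) :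
    colourCount f s = #{i | f i = s} := by
  simp only [colourCount, Finsupp.finsetSum_apply, Finsupp.single_apply, sum_boole, Nat.cast_id]

theorem colourCount_comp_equiv (f : I → S) (e : J ≃ I) :
    colourCount (f ∘ e) = colourCount f :=
  Equiv.sum_comp e fun i => Finsupp.single (f i) 1

theorem colourCount_sumElim (f : I → S) (g : J → S) :
    colourCount (Sum.elim f g) = colourCount f + colourCount g :=
  Fintype.sum_sum_type _

theorem sum_colourCount [Fintype S] (f : I → S) : ∑ s, colourCount f s = Fintype.card I := by
  classical
  simp only [colourCount_apply, card_eq_sum_card_fiberwise fun i (_ : i ∈ univ) => mem_univ (f i),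
    ← card_univ]

theorem toMultiset_colourCount (f : I → S) :
    Finsupp.toMultiset (colourCount f) = univ.val.map f := by
  simp only [colourCount, map_sum, Finsupp.toMultiset_single, one_nsmul]
  exact (congrArg Multiset.sum (Multiset.map_map _ f univ.val).symm).trans
    (Multiset.sum_map_singleton _)

theorem exists_perm_of_colourCount_eq {f g : I → S} (h : colourCount f = colourCount g) :
    ∃ σ : Equiv.Perm I, f = g ∘ σ :=
  exists_perm_of_multiset_map_eq <| by
    rw [← toMultiset_colourCount, h, toMultiset_colourCount]

theorem nodal_univ_comp [Fintype S] {K : Type*} [CommRing K] (z : S → K) (f : I → S) :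
    Lagrange.nodal univ (z ∘ f) =
      ∏ s, (Polynomial.X - Polynomial.C (z s)) ^ colourCount f s := by
  classical
  simp only [Lagrange.nodal, colourCount_apply, Function.comp_apply,
    prod_comp (fun s => Polynomial.X - Polynomial.C (z s)) f]
  exact prod_subset (subset_univ _) fun s _ hs => by
    rw [filter_eq_empty_iff.2 fun i _ h => hs (mem_image.2 ⟨i, mem_univ i, h⟩), card_empty,
      pow_zero]

theorem card_perm_comp_eq_s13 [DecidableEq I] [Fintype S] [DecidableEq S] (f g : I → S) :
    #{ρ : Equiv.Perm I | f ∘ ρ = g} =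
      if colourCount g = colourCount f then ∏ s, (colourCount f s).factorial else 0 := by
  split_ifs with h
  · obtain ⟨ρ₀, rfl⟩ := exists_perm_of_colourCount_eq h
    have coset : #{ρ : Equiv.Perm I | f ∘ ρ = f ∘ ρ₀} = #{ρ : Equiv.Perm I | f ∘ ρ = f} := by
      refine card_equiv (Equiv.mulRight ρ₀⁻¹) fun ρ => ?_
      simp only [mem_filter_univ, Equiv.coe_mulRight, Equiv.Perm.coe_mul, ← Function.comp_assoc]
      exact (Equiv.comp_symm_eq ρ₀ f (f ∘ ρ)).symm
    rw [coset, ← Fintype.card_subtype, DomMulAct.stabilizer_card]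
    simp only [colourCount_apply, Fintype.card_subtype]
  · refine card_eq_zero.2 (filter_eq_empty_iff.2 fun ρ _ hρ => h ?_)
    rw [← hρ, colourCount_comp_equiv]

theorem permanent_eq_sum_colourings [DecidableEq I] [Fintype S] [DecidableEq S]
    (c : I → S → R) (f : I → S) :
    (Matrix.of fun i j => c i (f j)).permanent =
      ∑ g : I → S, if colourCount g = colourCount f then
        (∏ s, (colourCount f s).factorial : ℕ) * ∏ i, c i (g i) else 0 := by
  have by_rows : (Matrix.of fun i j => c i (f j)).permanent =
      ∑ ρ : Equiv.Perm I, ∏ i, c i ((f ∘ ρ) i) :=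
    (Matrix.permanent_transpose _).symm
  rw [by_rows, ← sum_fiberwise univ fun ρ : Equiv.Perm I => f ∘ ρ]
  refine sum_congr rfl fun g _ => ?_
  rw [sum_congr rfl fun ρ hρ => by rw [(mem_filter.1 hρ).2], sum_const, nsmul_eq_mul,
    card_perm_comp_eq_s13]
  split_ifs <;> simp only [Nat.cast_zero, zero_mul]

theorem coeff_prod_linearForms [DecidableEq I] [Fintype S] [DecidableEq S] (c : I → S → R)
    (k : S →₀ ℕ) :
    (∏ i, ∑ s, c i s • MvPolynomial.X s : MvPolynomial S R).coeff k =
      ∑ g : I → S, if colourCount g = k then ∏ i, c i (g i) else 0 := by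
  classical
  simp only [prod_univ_sum, Fintype.piFinset_univ, MvPolynomial.coeff_sum, prod_smul,
    MvPolynomial.coeff_smul, smul_eq_mul]
  refine sum_congr rfl fun g _ => ?_
  have monomial_eq : ∏ i, MvPolynomial.X (R := R) (g i) =
      MvPolynomial.monomial (colourCount g) 1 :=
    (MvPolynomial.monomial_sum_one univ _).symm
  rw [monomial_eq, MvPolynomial.coeff_monomial, mul_ite, mul_one, mul_zero]

theorem coeff_prod_linearForms_mul_factorials [DecidableEq I] [Fintype S]
    (c : I → S → R) (f : I → S) :
    (∏ i, ∑ s, c i s • MvPolynomial.X s : MvPolynomial S R).coeff (colourCount f) *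
        (∏ s, (colourCount f s).factorial : ℕ) =
      (Matrix.of fun i j => c i (f j)).permanent := by
  classical
  rw [coeff_prod_linearForms, permanent_eq_sum_colourings, sum_mul]
  exact sum_congr rfl fun g _ => by rw [ite_mul, zero_mul, mul_comm]

theorem coeff_prod_linearForms_eq_zero [Fintype S] (c : I → S → R) {k : S →₀ ℕ}
    (hk : ∑ s, k s ≠ Fintype.card I) :
    (∏ i, ∑ s, c i s • MvPolynomial.X s : MvPolynomial S R).coeff k = 0 := by
  classical
  rw [coeff_prod_linearForms]
  exact sum_eq_zero fun g _ => if_neg fun h => hk (by rw [← h, sum_colourCount])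

end Colourings

section PolynomialRealisation

variable {m}

/-- The exponent vector of the monomial that represents the basis vector labelled by `l`. -/
def exponent (l : Idx m) : Fin n →₀ ℕ := Finsupp.equivFunOnFinite.symm fun s => (l s : ℕ)

@[simp] theorem exponent_apply (l : Idx m) (s : Fin n) : exponent l s = (l s : ℕ) := rfl

theorem exponent_update_sub_one_add_single (l : Idx m) {s : Fin n} (hs : l s ≠ 0) :
    exponent (Function.update l s (l s - 1)) + Finsupp.single s 1 = exponent l := by
  ext u
  obtain rfl | hu := eq_or_ne u s
  · simp only [Finsupp.add_apply, exponent_apply, Function.update_self, Finsupp.single_eq_same,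
      Fin.val_sub_one_of_ne_zero hs]
    exact Nat.sub_add_cancel (Nat.one_le_iff_ne_zero.2 (Fin.val_ne_zero_iff.2 hs))
  · simp only [Finsupp.add_apply, exponent_apply, Function.update_of_ne hu,
      Finsupp.single_eq_of_ne hu, add_zero]

theorem exponent_update_add_one (l : Idx m) {s : Fin n} (hs : (l s : ℕ) < m s) :
    exponent (Function.update l s (l s + 1)) = exponent l + Finsupp.single s 1 := by
  ext u
  obtain rfl | hu := eq_or_ne u s
  · simp only [Finsupp.add_apply, exponent_apply, Function.update_self, Finsupp.single_eq_same,
      Fin.val_add_one_of_lt (show l u < Fin.last (m u) from hs)]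
  · simp only [Finsupp.add_apply, exponent_apply, Function.update_of_ne hu,
      Finsupp.single_eq_of_ne hu, add_zero]

theorem prod_factorial_add_single (k : Fin n →₀ ℕ) (s : Fin n) :
    ∏ u, ((k + Finsupp.single s 1 : Fin n →₀ ℕ) u).factorial =
      (k s + 1) * ∏ u, (k u).factorial := by
  rw [← mul_prod_erase univ _ (mem_univ s), ← mul_prod_erase univ (fun u => (k u).factorial)
    (mem_univ s), Finsupp.add_apply, Finsupp.single_eq_same, Nat.factorial_succ, mul_assoc]
  congr 2
  exact prod_congr rfl fun u hu => by
    rw [Finsupp.add_apply, Finsupp.single_eq_of_ne (ne_of_mem_erase hu), add_zero]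

variable (m) in
/-- The realisation of `V` by polynomials: `∏ x_s ^ l_s` stands for `(∏ l_s!) v_l`, and for `0`
when some `l_s > m_s`. With these factorials `e21` becomes multiplication by `∑ x_s`, and `e12`
becomes the differential operator `e12Diff`. -/
def vectorOfPolynomial : MvPolynomial (Fin n) ℂ →ₗ[ℂ] TV m where
  toFun p l := p.coeff (exponent l) * (∏ s, (exponent l s).factorial : ℕ)
  map_add' p q := by funext l; simp only [MvPolynomial.coeff_add, add_mul, Pi.add_apply]
  map_smul' a p := by
    funext l
    simp only [MvPolynomial.coeff_smul, smul_eq_mul, mul_assoc, Pi.smul_apply, RingHom.id_apply]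

theorem vectorOfPolynomial_apply (p : MvPolynomial (Fin n) ℂ) (l : Idx m) :
    vectorOfPolynomial m p l = p.coeff (exponent l) * (∏ s, (exponent l s).factorial : ℕ) := rfl

theorem E21_vectorOfPolynomial (s : Fin n) (p : MvPolynomial (Fin n) ℂ) :
    E21 m s (vectorOfPolynomial m p) = vectorOfPolynomial m (MvPolynomial.X s * p) := by
  funext l
  simp only [E21, mulShift, LinearMap.coe_mk, AddHom.coe_mk, vectorOfPolynomial_apply]
  obtain hs | hs := eq_or_ne (l s) 0
  · have not_mem : s ∉ (exponent l).support := by simp [hs]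
    simp [hs, MvPolynomial.coeff_X_mul', not_mem]
  · have exponent_l := exponent_update_sub_one_add_single l hs
    have apply_s : ((l s : ℕ) : ℂ) = exponent (Function.update l s (l s - 1)) s + 1 := by
      rw [← exponent_apply, ← exponent_l]
      simp only [Finsupp.add_apply, Finsupp.single_eq_same, Nat.cast_add, Nat.cast_one]
    rw [← exponent_l, prod_factorial_add_single, add_comm _ (Finsupp.single s 1),
      MvPolynomial.coeff_X_mul, apply_s]
    push_cast
    ring

theorem coeff_X_mul_pderiv_pderiv {S R : Type*} [CommSemiring R] (s : S) (p : MvPolynomial S R)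
    (k : S →₀ ℕ) :
    (MvPolynomial.X s * MvPolynomial.pderiv s (MvPolynomial.pderiv s p)).coeff k =
      k s * (k s + 1) * p.coeff (k + Finsupp.single s 1) := by
  classical
  rw [MvPolynomial.coeff_X_mul']
  split_ifs with hs
  · have pos : Finsupp.single s 1 ≤ k :=
      Finsupp.single_le_iff.2 (Nat.one_le_iff_ne_zero.2 (Finsupp.mem_support_iff.1 hs))
    obtain ⟨k, rfl⟩ := exists_add_of_le pos
    simp only [add_tsub_cancel_left, MvPolynomial.coeff_pderiv, Finsupp.add_apply,
      Finsupp.single_eq_same]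
    push_cast
    rw [add_comm (Finsupp.single s 1) k]
    ring
  · rw [Finsupp.notMem_support_iff.1 hs, Nat.cast_zero, zero_mul, zero_mul]

theorem E12_vectorOfPolynomial (s : Fin n) (p : MvPolynomial (Fin n) ℂ) :
    E12 m s (vectorOfPolynomial m p) =
      vectorOfPolynomial m (MvPolynomial.C (m s : ℂ) * MvPolynomial.pderiv s p -
        MvPolynomial.X s * MvPolynomial.pderiv s (MvPolynomial.pderiv s p)) := by
  funext l
  simp only [E12, mulShift, LinearMap.coe_mk, AddHom.coe_mk, vectorOfPolynomial_apply,
    MvPolynomial.coeff_sub, MvPolynomial.coeff_C_mul, coeff_X_mul_pderiv_pderiv,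
    MvPolynomial.coeff_pderiv]
  obtain hs | hs := (Fin.is_le (l s)).eq_or_lt
  · rw [exponent_apply, hs]
    ring
  · rw [exponent_update_add_one l hs, prod_factorial_add_single]
    push_cast [exponent_apply]
    ring

variable (m) in
/-- The differential operator `∑ (m_s ∂_s - x_s ∂_s²)` by which `e12` acts on polynomials. -/
def e12Diff (p : MvPolynomial (Fin n) ℂ) : MvPolynomial (Fin n) ℂ :=
  ∑ s, (MvPolynomial.C (m s : ℂ) * MvPolynomial.pderiv s p -
    MvPolynomial.X s * MvPolynomial.pderiv s (MvPolynomial.pderiv s p))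

theorem e12T_vectorOfPolynomial (p : MvPolynomial (Fin n) ℂ) :
    e12T m (vectorOfPolynomial m p) = vectorOfPolynomial m (e12Diff m p) := by
  simp only [e12Diff, map_sum, ← E12_vectorOfPolynomial, e12T, LinearMap.sum_apply]

theorem e21T_pow_vectorOfPolynomial (k : ℕ) (p : MvPolynomial (Fin n) ℂ) :
    (e21T m ^ k) (vectorOfPolynomial m p) =
      vectorOfPolynomial m ((∑ s, MvPolynomial.X s) ^ k * p) := by
  induction k with
  | zero => simp only [pow_zero, Module.End.one_apply, one_mul]
  | succ k ih =>
    rw [pow_succ', Module.End.mul_apply, ih]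
    simp only [pow_succ', mul_assoc, sum_mul, map_sum, ← E21_vectorOfPolynomial, e21T,
      LinearMap.sum_apply]

end PolynomialRealisation

section BetheVectors

variable {m} {I : Type*} [Fintype I]

theorem vectorOfPolynomial_prod_linearForms [DecidableEq I] (c : I → Fin n → ℂ) {l : Idx m}
    {f : I → Fin n} (hf : colourCount f = exponent l) :
    vectorOfPolynomial m (∏ i, ∑ s, c i s • MvPolynomial.X s) l =
      (Matrix.of fun i j => c i (f j)).permanent := by
  rw [vectorOfPolynomial_apply, ← hf, coeff_prod_linearForms_mul_factorials]

theorem vectorOfPolynomial_prod_linearForms_eq_zero (c : I → Fin n → ℂ) {l : Idx m}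
    (hl : ∑ s, (l s : ℕ) ≠ Fintype.card I) :
    vectorOfPolynomial m (∏ i, ∑ s, c i s • MvPolynomial.X s) l = 0 := by
  rw [vectorOfPolynomial_apply, coeff_prod_linearForms_eq_zero c hl, zero_mul]

/-- The colouring of `0, 1, 2, …` whose first `l 0` values are `0`, the next `l 1` are `1`, etc. -/
def blockColouring (l : Idx m) (i : Fin (∑ s, (l s : ℕ))) : Fin n := (finSigmaFinEquiv.symm i).1

theorem colourCount_blockColouring (l : Idx m) : colourCount (blockColouring l) = exponent l := by
  have on_blocks : blockColouring l ∘ finSigmaFinEquiv = Sigma.fst := by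
    funext x
    simp only [Function.comp_apply, blockColouring, Equiv.symm_apply_apply]
  rw [← colourCount_comp_equiv _ finSigmaFinEquiv, on_blocks]
  ext s
  simp only [colourCount, Fintype.sum_sigma, sum_const, card_univ, Fintype.card_fin,
    Finsupp.finsetSum_apply, Finsupp.smul_apply, Finsupp.single_apply, smul_eq_mul, mul_ite,
    mul_one, mul_zero, sum_ite_eq', mem_univ, if_true, exponent_apply]

theorem val_finSigmaFinEquiv (l : Idx m) (s : Fin n) (j : Fin (l s)) :
    (finSigmaFinEquiv (n := fun s => (l s : ℕ)) ⟨s, j⟩ : ℕ) = pref m l s + j := by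
  rw [finSigmaFinEquiv_apply, pref]
  congr 1
  refine sum_bij (fun i _ => Fin.castLE s.2.le i) (fun i _ => ?_) (fun i _ j _ h => ?_)
    (fun u hu => ?_) fun i _ => rfl
  · exact (mem_filter_univ _).2 (Fin.lt_def.2 i.2)
  · exact Fin.castLE_injective _ h
  · exact ⟨⟨u, (mem_filter_univ u).1 hu⟩, mem_univ _, rfl⟩

theorem omegaCoeff_eq_permanent (z : Fin n → ℂ) (l : Idx m) (t : Fin (∑ s, (l s : ℕ)) → ℂ) :
    omegaCoeff m z t l = (cauchyMatrix t (z ∘ blockColouring l)).permanent := by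
  refine sum_congr rfl fun ρ _ => ?_
  rw [← Equiv.prod_comp finSigmaFinEquiv, Fintype.prod_sigma]
  refine prod_congr rfl fun s _ => ?_
  rw [prod_Ico_eq_prod_range, add_tsub_cancel_left, prod_range]
  refine prod_congr rfl fun j _ => ?_
  rw [← val_finSigmaFinEquiv, extt, dif_pos (Fin.is_lt _)]
  simp only [Function.comp_apply, cauchyMatrix, Matrix.of_apply, blockColouring,
    Equiv.symm_apply_apply, Fin.eta]

theorem betheVec_eq_vectorOfPolynomial (z : Fin n → ℂ) {m' : ℕ} (t : Fin m' → ℂ) :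
    betheVec m z t =
      vectorOfPolynomial m (∏ i, ∑ s, (t i - z s)⁻¹ • MvPolynomial.X s) := by
  funext l
  by_cases hl : ∑ s, (l s : ℕ) = m'
  · subst hl
    rw [betheVec, if_pos rfl, omegaCoeff_eq_permanent, vectorOfPolynomial_prod_linearForms
      (fun i s => (t i - z s)⁻¹) (colourCount_blockColouring l)]
    rfl
  · rw [betheVec, if_neg hl, vectorOfPolynomial_prod_linearForms_eq_zero
      fun i s => (t i - z s)⁻¹]
    rwa [Fintype.card_fin]

theorem betheVec_apply_eq_permanent (z : Fin n → ℂ) {m' : ℕ} (t : Fin m' → ℂ) {l : Idx m}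
    {f : Fin m' → Fin n} (hf : colourCount f = exponent l) :
    betheVec m z t l = (cauchyMatrix t (z ∘ f)).permanent := by
  rw [betheVec_eq_vectorOfPolynomial, vectorOfPolynomial_prod_linearForms _ hf]
  rfl

end BetheVectors

section BetheSolutions

variable {K : Type*} [Field K] {I S : Type*} [DecidableEq I]

theorem derivation_prod {A : Type*} [CommRing A] [Algebra K A] (d : Derivation K A A)
    (f : I → A) (s : Finset I) :
    d (∏ i ∈ s, f i) = ∑ i ∈ s, (∏ j ∈ s.erase i, f j) * d (f i) := by
  induction s using Finset.induction_on with
  | empty => simp only [prod_empty, sum_empty, Derivation.map_one_eq_zero]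
  | insert a s ha ih =>
    rw [prod_insert ha, Derivation.leibniz, ih, sum_insert ha, erase_insert ha, add_comm,
      smul_eq_mul, smul_eq_mul, mul_sum]
    congr 1
    refine sum_congr rfl fun i hi => ?_
    rw [erase_insert_of_ne (ne_of_mem_of_not_mem hi ha).symm,
      prod_insert fun h => ha (mem_of_mem_erase h), mul_assoc]

variable [Fintype S] {A : Type*} [CommRing A] [Algebra K A]

/-- The linear form `∑ x_s / (u - z_s)` in the coordinates `x`. -/
def poleForm (x : S → A) (z : S → K) (u : K) : A := ∑ s, (u - z s)⁻¹ • x s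

variable {x : S → A} {w z : S → K} {t : I → K}

theorem sum_inv_mul_inv_smul {u v : K} (huv : u ≠ v) (hu : ∀ s, u ≠ z s) (hv : ∀ s, v ≠ z s) :
    ∑ s, ((u - z s)⁻¹ * (v - z s)⁻¹) • x s =
      (v - u)⁻¹ • (poleForm x z u - poleForm x z v) := by
  simp only [poleForm, ← sum_sub_distrib, ← sub_smul, smul_sum, smul_smul]
  refine sum_congr rfl fun s _ => congrArg (· • x s) ?_
  have huv := sub_ne_zero.2 huv.symm
  have hu := sub_ne_zero.2 (hu s)
  have hv := sub_ne_zero.2 (hv s)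
  field_simp
  ring

variable [DecidableEq S] {d : S → Derivation K A A}

theorem derivation_poleForm (hd : ∀ s, d s ∘ x = Pi.single s 1) (s : S) (u : K) :
    d s (poleForm x z u) = algebraMap K A (u - z s)⁻¹ := by
  have hds (s' : S) : d s (x s') = (Pi.single s 1 : S → A) s' := congrFun (hd s) s'
  simp only [poleForm, map_sum, Derivation.map_smul, hds, Pi.single_apply, smul_ite, smul_zero,
    sum_ite_eq', mem_univ, if_true]
  rw [Algebra.smul_def, mul_one]

theorem derivation_prod_poleForm (hd : ∀ s, d s ∘ x = Pi.single s 1) (s : S)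
    (T : Finset I) :
    d s (∏ i ∈ T, poleForm x z (t i)) =
      ∑ i ∈ T, (t i - z s)⁻¹ • ∏ j ∈ T.erase i, poleForm x z (t j) := by
  simp only [derivation_prod, derivation_poleForm hd, Algebra.smul_def, mul_comm]

variable [Fintype I]

theorem sum_mul_derivation_derivation_prod_poleForm
    (hd : ∀ s, d s ∘ x = Pi.single s 1) (ht : Function.Injective t)
    (htz : ∀ i s, t i ≠ z s) :
    ∑ s, x s * d s (d s (∏ i, poleForm x z (t i))) =
      ∑ i, ∑ j ∈ univ.erase i, (t j - t i)⁻¹ •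
        (∏ k ∈ univ.erase j, poleForm x z (t k) - ∏ k ∈ univ.erase i, poleForm x z (t k)) := by
  simp only [derivation_prod_poleForm hd, map_sum, Derivation.map_smul, mul_sum, smul_sum,
    smul_smul]
  rw [sum_comm]
  refine sum_congr rfl fun i _ => ?_
  rw [sum_comm]
  refine sum_congr rfl fun j hj => ?_
  have prod_erase_j : ∏ k ∈ univ.erase j, poleForm x z (t k) =
      poleForm x z (t i) * ∏ k ∈ (univ.erase i).erase j, poleForm x z (t k) := by
    rw [erase_right_comm]
    exact (mul_prod_erase _ _ (mem_erase.2 ⟨(ne_of_mem_erase hj).symm, mem_univ i⟩)).symm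
  have prod_erase_i : ∏ k ∈ univ.erase i, poleForm x z (t k) =
      poleForm x z (t j) * ∏ k ∈ (univ.erase i).erase j, poleForm x z (t k) :=
    (mul_prod_erase _ _ hj).symm
  rw [prod_erase_i, prod_erase_j, ← sub_mul, ← smul_mul_assoc,
    ← sum_inv_mul_inv_smul (ht.ne (ne_of_mem_erase hj).symm) (htz i) (htz j), sum_mul]
  exact sum_congr rfl fun s _ => by rw [mul_smul_comm, smul_mul_assoc]

theorem sum_sum_erase_smul_sub (t : I → K) (G : I → A) :
    ∑ i, ∑ j ∈ univ.erase i, (t j - t i)⁻¹ • (G j - G i) =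
      ∑ i, (∑ j ∈ univ.erase i, 2 * (t i - t j)⁻¹) • G i := by
  have swap : ∑ i, ∑ j ∈ univ.erase i, (t j - t i)⁻¹ • G j =
      ∑ i, ∑ j ∈ univ.erase i, (t i - t j)⁻¹ • G i :=
    sum_comm' fun i j => by simp only [mem_univ, true_and, and_true, mem_erase, ne_comm]
  simp only [smul_sub, sum_sub_distrib, swap]
  simp only [← sum_sub_distrib, ← sub_smul, sum_smul]
  refine sum_congr rfl fun i _ => sum_congr rfl fun j _ => congrArg (· • G i) ?_
  rw [← neg_sub (t i) (t j), inv_neg]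
  ring

/-- Solutions `t` of the Bethe ansatz equations with sites `z` of weights `w`. The Bethe ansatz
equations for `(z; μ; V[ν])` are of this form once `0` is added to the sites, with weight
`μ - ν / 2 - 1`. -/
structure IsBetheSolution (w z : S → K) (t : I → K) : Prop where
  injective : Function.Injective t
  ne (i : I) (s : S) : t i ≠ z s
  sum_eq (i : I) : ∑ s, w s * (t i - z s)⁻¹ = ∑ j ∈ univ.erase i, 2 * (t i - t j)⁻¹

theorem IsBetheSolution.sum_derivation_prod_poleForm_eq_zero (h : IsBetheSolution w z t)
    (hd : ∀ s, d s ∘ x = Pi.single s 1) :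
    ∑ s, (w s • d s (∏ i, poleForm x z (t i)) -
      x s * d s (d s (∏ i, poleForm x z (t i)))) = 0 := by
  have first_order : ∑ s, w s • d s (∏ i, poleForm x z (t i)) =
      ∑ i, (∑ s, w s * (t i - z s)⁻¹) • ∏ k ∈ univ.erase i, poleForm x z (t k) := by
    simp only [derivation_prod_poleForm hd, smul_sum, smul_smul, sum_smul]
    exact sum_comm
  rw [sum_sub_distrib, first_order,
    sum_mul_derivation_derivation_prod_poleForm hd h.injective h.ne, sum_sum_erase_smul_sub]
  simp only [h.sum_eq, sub_self]

end BetheSolutions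

section BetheGeneratingPolynomial

open Polynomial

/-- The derivations `∂/∂X` (at `none`) and `∂/∂x_s` (at `some s`) of `ℂ[x_0, …, x_{n-1}][X]`. -/
def coordDerivation :
    Option (Fin n) → Derivation ℂ (MvPolynomial (Fin n) ℂ)[X] (MvPolynomial (Fin n) ℂ)[X] :=
  Option.elim' ((derivative' (R := MvPolynomial (Fin n) ℂ)).restrictScalars ℂ) fun s =>
    PolynomialModule.equivPolynomialSelf.compDer (MvPolynomial.pderiv s).mapCoeffs

theorem coordDerivation_none (p : (MvPolynomial (Fin n) ℂ)[X]) :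
    coordDerivation none p = derivative p := rfl

theorem coeff_coordDerivation_some (s : Fin n) (p : (MvPolynomial (Fin n) ℂ)[X]) (k : ℕ) :
    (coordDerivation (some s) p).coeff k = MvPolynomial.pderiv s (p.coeff k) := rfl

/-- The coordinates `X` (at `none`) and `x_s` (at `some s`) of `ℂ[x_0, …, x_{n-1}][X]`. -/
def coord : Option (Fin n) → (MvPolynomial (Fin n) ℂ)[X] :=
  Option.elim' X fun s => C (MvPolynomial.X s)

theorem coordDerivation_comp_coord (s : Option (Fin n)) :
    coordDerivation s ∘ coord = Pi.single s 1 := by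
  funext s'
  obtain _ | s := s
  · obtain _ | s' := s' <;> simp [coord, coordDerivation_none]
  · ext1 k
    obtain _ | s' := s'
    · simp [coord, coeff_coordDerivation_some, coeff_X, apply_ite (MvPolynomial.pderiv s)]
    · by_cases hs : s' = s <;>
        simp [coord, coeff_coordDerivation_some, coeff_C, apply_ite (MvPolynomial.pderiv s),
          coeff_one, MvPolynomial.pderiv_X, hs]

variable {I : Type*} [Fintype I] {m} (z : Fin n → ℂ) (t : I → ℂ)

/-- The generating polynomial of the vectors obtained from the Bethe vector of `t` (its constant
coefficient) by powers of `e12`; the variable `X` is the coordinate of the additional site `0`. -/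
def betheGenerating : (MvPolynomial (Fin n) ℂ)[X] :=
  ∏ i, poleForm coord (Option.elim' 0 z) (t i)

theorem poleForm_coord (u : ℂ) :
    poleForm coord (Option.elim' 0 z) u =
      C (MvPolynomial.C u⁻¹) * X + C (poleForm MvPolynomial.X z u) := by
  simp only [poleForm, coord, Fintype.sum_option, Option.elim'_none, Option.elim'_some, sub_zero,
    map_sum, Algebra.smul_def, map_mul]
  rfl

theorem eval_betheGenerating (a : MvPolynomial (Fin n) ℂ) :
    (betheGenerating z t).eval a =
      ∏ i, (MvPolynomial.C (t i)⁻¹ * a + poleForm MvPolynomial.X z (t i)) := by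
  simp only [betheGenerating, poleForm_coord, eval_prod, eval_add, eval_mul, eval_C, eval_X]

theorem coeff_zero_betheGenerating :
    (betheGenerating z t).coeff 0 = ∏ i, poleForm MvPolynomial.X z (t i) := by
  rw [coeff_zero_eq_eval_zero, eval_betheGenerating]
  simp only [mul_zero, zero_add]

theorem natDegree_betheGenerating_le : (betheGenerating z t).natDegree ≤ Fintype.card I := by
  refine (natDegree_prod_le _ _).trans ((sum_le_card_nsmul _ _ 1 fun i _ => ?_).trans_eq ?_)
  · rw [poleForm_coord]
    exact natDegree_linear_le
  · rw [card_univ, smul_eq_mul, mul_one]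

theorem coeff_card_betheGenerating :
    (betheGenerating z t).coeff (Fintype.card I) = MvPolynomial.C (∏ i, (t i)⁻¹) := by
  have linear (i : I) (_ : i ∈ univ) : (C (MvPolynomial.C (t i)⁻¹) * X +
      C (poleForm MvPolynomial.X z (t i))).natDegree ≤ 1 := natDegree_linear_le
  have top := coeff_prod_of_natDegree_le (s := univ) (fun i => C (MvPolynomial.C (t i)⁻¹) * X +
    C (poleForm MvPolynomial.X z (t i))) 1 linear
  rw [mul_one, card_univ] at top
  simp only [betheGenerating, poleForm_coord, top, map_prod, coeff_add, coeff_C_mul, coeff_X_one,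
    coeff_C_succ, mul_one, add_zero]

variable {z t} [DecidableEq I] {lam : ℂ}

theorem e12Diff_coeff_betheGenerating
    (h : IsBetheSolution (Option.elim' lam fun s => (m s : ℂ)) (Option.elim' 0 z) t) (k : ℕ) :
    e12Diff m ((betheGenerating z t).coeff k) =
      (-((k + 1) * (lam - k))) • (betheGenerating z t).coeff (k + 1) := by
  have coeff_X_mul_derivative₂ (p : (MvPolynomial (Fin n) ℂ)[X]) :
      (X * derivative (derivative p)).coeff k = k * (k + 1) * p.coeff (k + 1) := by
    cases k with
    | zero => simp only [coeff_X_mul_zero, Nat.cast_zero, zero_mul]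
    | succ k =>
      rw [coeff_X_mul, coeff_derivative, coeff_derivative]
      push_cast
      ring
  have coeff_eq := congrArg (coeff · k)
    (h.sum_derivation_prod_poleForm_eq_zero coordDerivation_comp_coord)
  change (∑ s, (_ • coordDerivation s (betheGenerating z t) - coord s *
    coordDerivation s (coordDerivation s (betheGenerating z t)))).coeff k = 0 at coeff_eq
  simp only [coord, Fintype.sum_option, Option.elim'_none, Option.elim'_some,
    coordDerivation_none, coeff_add, coeff_sub, coeff_smul, finsetSum_coeff, coeff_C_mul,
    coeff_coordDerivation_some, coeff_X_mul_derivative₂, coeff_derivative,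
    MvPolynomial.smul_eq_C_mul] at coeff_eq
  rw [MvPolynomial.smul_eq_C_mul]
  simp only [map_neg, map_mul, map_sub, map_add, map_one, map_natCast]
  rw [e12Diff]
  linear_combination coeff_eq

end BetheGeneratingPolynomial

section ProjectionOfBetheVectors

variable {m} {z : Fin n → ℂ} {m' : ℕ} {t : Fin m' → ℂ} {lam : ℂ}

theorem betheVec_apply_eq_zero (z : Fin n → ℂ) (t : Fin m' → ℂ) {l : Idx m}
    (hl : ∑ s, (l s : ℕ) ≠ m') : betheVec m z t l = 0 := if_neg hl

theorem betheVec_eq_vectorOfPolynomial_coeff_zero (z : Fin n → ℂ) (t : Fin m' → ℂ) :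
    betheVec m z t = vectorOfPolynomial m ((betheGenerating z t).coeff 0) := by
  rw [betheVec_eq_vectorOfPolynomial, coeff_zero_betheGenerating]
  rfl

theorem e12T_pow_betheVec
    (h : IsBetheSolution (Option.elim' lam fun s => (m s : ℂ)) (Option.elim' 0 z) t) (k : ℕ) :
    (e12T m ^ k) (betheVec m z t) = ((-1) ^ k * k.factorial * ∏ j ∈ range k, (lam - j)) •
      vectorOfPolynomial m ((betheGenerating z t).coeff k) := by
  rw [betheVec_eq_vectorOfPolynomial_coeff_zero]
  induction k with
  | zero =>
    simp only [pow_zero, Module.End.one_apply, Nat.factorial_zero, Nat.cast_one, mul_one,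
      range_zero, prod_empty, one_smul]
  | succ k ih =>
    rw [pow_succ', Module.End.mul_apply, ih, map_smul, e12T_vectorOfPolynomial,
      e12Diff_coeff_betheGenerating h, map_smul, smul_smul, prod_range_succ, Nat.factorial_succ]
    congr 1
    push_cast
    ring

theorem betheVec_ne_zero
    (h : IsBetheSolution (Option.elim' lam fun s => (m s : ℂ)) (Option.elim' 0 z) t)
    (hlam : ∀ k : ℕ, lam ≠ k) : betheVec m z t ≠ 0 := by
  intro eq_zero
  have scalar_ne : (-1) ^ m' * m'.factorial * ∏ j ∈ range m', (lam - j) ≠ 0 :=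
    mul_ne_zero (mul_ne_zero (pow_ne_zero _ (neg_ne_zero.2 one_ne_zero))
      (Nat.cast_ne_zero.2 m'.factorial_ne_zero))
      (prod_ne_zero_iff.2 fun j _ => sub_ne_zero.2 (hlam j))
  have top_eq_zero : vectorOfPolynomial m ((betheGenerating z t).coeff m') = 0 :=
    (smul_eq_zero.1 ((e12T_pow_betheVec h m').symm.trans
      (by rw [eq_zero, map_zero]))).resolve_left scalar_ne
  have exponent_zero : exponent (0 : Idx m) = 0 := by
    ext
    simp only [exponent_apply, Pi.zero_apply, Fin.val_zero, Finsupp.coe_zero]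
  have top_apply := congrFun top_eq_zero 0
  have top := coeff_card_betheGenerating z t
  rw [Fintype.card_fin] at top
  rw [top, vectorOfPolynomial_apply, exponent_zero, MvPolynomial.coeff_zero_C] at top_apply
  simp only [Finsupp.coe_zero, Pi.zero_apply, Nat.factorial_zero, prod_const_one, Nat.cast_one,
    mul_one] at top_apply
  exact prod_ne_zero_iff.2 (fun i _ => inv_ne_zero (h.ne i none)) top_apply

theorem mulShift_wt_betheVec (z : Fin n → ℂ) (t : Fin m' → ℂ) (φ : ℂ → ℂ) :
    mulShift (fun l : Idx m => φ (wt m l)) id (betheVec m z t) =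
      φ ((∑ s, m s : ℕ) - 2 * (m' : ℂ)) • betheVec m z t := by
  funext l
  simp only [mulShift, LinearMap.coe_mk, AddHom.coe_mk, id, Pi.smul_apply, smul_eq_mul]
  by_cases hl : ∑ s, (l s : ℕ) = m'
  · have wt_eq : (wt m l : ℂ) = (∑ s, m s : ℕ) - 2 * (m' : ℂ) := by
      rw [wt, ← hl, sum_sub_distrib, ← mul_sum]
      push_cast
      rfl
    rw [wt_eq]
  · rw [betheVec_apply_eq_zero z t hl, mul_zero, mul_zero]

theorem eval_neg_sum_X_betheGenerating (ht0 : ∀ i, t i ≠ 0) (htz : ∀ i s, t i ≠ z s) :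
    (betheGenerating z t).eval (-∑ s, MvPolynomial.X s) =
      ∏ i, ∑ s, ((t i)⁻¹ * (z s * (t i - z s)⁻¹)) • MvPolynomial.X s := by
  rw [eval_betheGenerating]
  refine prod_congr rfl fun i _ => ?_
  rw [mul_neg, mul_sum, ← sum_neg_distrib, poleForm, ← sum_add_distrib]
  refine sum_congr rfl fun s _ => ?_
  have partial_fractions : (t i)⁻¹ * (z s * (t i - z s)⁻¹) = (t i - z s)⁻¹ - (t i)⁻¹ := by
    have := ht0 i
    have := sub_ne_zero.2 (htz i s)
    field_simp
    ring
  rw [partial_fractions, sub_smul, MvPolynomial.smul_eq_C_mul _ (t i)⁻¹]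
  ring

theorem pOp_summand_betheVec
    (h : IsBetheSolution (Option.elim' lam fun s => (m s : ℂ)) (Option.elim' 0 z) t)
    (hlam : ∀ k : ℕ, lam ≠ k) (k : ℕ) :
    (e21T m ^ k * e12T m ^ k * mulShift (fun l : Idx m => (k.factorial : ℂ)⁻¹ *
      ∏ j ∈ range k, (lam + ((∑ s, m s : ℕ) - 2 * (m' : ℂ)) - wt m l - j)⁻¹) id)
        (betheVec m z t) =
      vectorOfPolynomial m
        ((betheGenerating z t).coeff k * (-∑ s, MvPolynomial.X s) ^ k) := by
  have scalar : (k.factorial : ℂ)⁻¹ * (∏ j ∈ range k, (lam - j)⁻¹) *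
      ((-1) ^ k * k.factorial * ∏ j ∈ range k, (lam - j)) = (-1) ^ k := by
    have := prod_ne_zero_iff.2 fun j (_ : j ∈ range k) => sub_ne_zero.2 (hlam j)
    have : (k.factorial : ℂ) ≠ 0 := Nat.cast_ne_zero.2 k.factorial_ne_zero
    rw [prod_inv_distrib]
    field_simp
  rw [Module.End.mul_apply, mulShift_wt_betheVec z t fun w => (k.factorial : ℂ)⁻¹ *
    ∏ j ∈ range k, (lam + ((∑ s, m s : ℕ) - 2 * (m' : ℂ)) - w - j)⁻¹, add_sub_cancel_right,
    Module.End.mul_apply, map_smul, e12T_pow_betheVec h, smul_smul, scalar, map_smul,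
    e21T_pow_vectorOfPolynomial, ← map_smul,
    neg_pow (∑ s, (MvPolynomial.X s : MvPolynomial (Fin n) ℂ)) k, MvPolynomial.smul_eq_C_mul]
  congr 1
  simp only [map_pow, map_neg, map_one]
  ring

theorem pOp_betheVec
    (h : IsBetheSolution (Option.elim' lam fun s => (m s : ℂ)) (Option.elim' 0 z) t)
    (hlam : ∀ k : ℕ, lam ≠ k) (hm' : m' ≤ ∑ s, m s) :
    pOp m (lam + ((∑ s, m s : ℕ) - 2 * (m' : ℂ))) (betheVec m z t) =
      vectorOfPolynomial m
        (∏ i, ∑ s, ((t i)⁻¹ * (z s * (t i - z s)⁻¹)) • MvPolynomial.X s) := by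
  have degree_lt : (betheGenerating z t).natDegree < ∑ s, m s + 1 := by
    have := natDegree_betheGenerating_le z t
    rw [Fintype.card_fin] at this
    exact Nat.lt_succ_of_le (this.trans hm')
  rw [pOp, LinearMap.sum_apply, sum_congr rfl fun k _ => pOp_summand_betheVec h hlam k, ← map_sum,
    ← Polynomial.eval_eq_sum_range' degree_lt]
  exact congrArg _
    (eval_neg_sum_X_betheGenerating (fun i => h.ne i none) fun i s => h.ne i (some s))

theorem pOp_betheVec_apply_eq_zero
    (h : IsBetheSolution (Option.elim' lam fun s => (m s : ℂ)) (Option.elim' 0 z) t)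
    (hlam : ∀ k : ℕ, lam ≠ k) (hm' : m' ≤ ∑ s, m s) {l : Idx m} (hl : ∑ s, (l s : ℕ) ≠ m') :
    pOp m (lam + ((∑ s, m s : ℕ) - 2 * (m' : ℂ))) (betheVec m z t) l = 0 := by
  rw [pOp_betheVec h hlam hm']
  exact vectorOfPolynomial_prod_linearForms_eq_zero _ (by rwa [Fintype.card_fin])

theorem pOp_betheVec_apply
    (h : IsBetheSolution (Option.elim' lam fun s => (m s : ℂ)) (Option.elim' 0 z) t)
    (hlam : ∀ k : ℕ, lam ≠ k) (hm' : m' ≤ ∑ s, m s) {l : Idx m} {f : Fin m' → Fin n}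
    (hf : colourCount f = exponent l) :
    pOp m (lam + ((∑ s, m s : ℕ) - 2 * (m' : ℂ))) (betheVec m z t) l =
      (∏ i, (t i)⁻¹) * (betheVec m z t l * ∏ i, z (f i)) := by
  rw [pOp_betheVec h hlam hm', vectorOfPolynomial_prod_linearForms _ hf,
    betheVec_apply_eq_permanent z t hf, Matrix.permanent, Matrix.permanent, sum_mul, mul_sum]
  refine sum_congr rfl fun ρ _ => ?_
  simp only [Matrix.of_apply, cauchyMatrix, Function.comp_apply, prod_mul_distrib,
    Equiv.prod_comp ρ fun i => (t i)⁻¹]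
  ring

end ProjectionOfBetheVectors

section BetheEquationsFromWronskian

open Polynomial Lagrange

theorem eval_derivative_nodal {K ι : Type*} [Field K] {s : Finset ι} {v : ι → K} {x : K}
    (hx : ∀ i ∈ s, x ≠ v i) :
    eval x (derivative (nodal s v)) = eval x (nodal s v) * ∑ i ∈ s, (x - v i)⁻¹ := by
  classical
  rw [derivative_nodal, eval_finsetSum, mul_sum]
  refine sum_congr rfl fun i hi => ?_
  rw [nodal_eq_mul_nodal_erase hi, eval_mul, eval_sub, eval_X, eval_C, mul_comm,
    inv_mul_cancel_left₀ (sub_ne_zero.2 (hx i hi))]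

theorem eval_twistedWronskian_X_sub_C_mul_left {R : Type*} [CommRing R] (α a : R) (g h : R[X]) :
    eval a (twistedWronskian α ((X - C a) * g) h) = -(a * (eval a g * eval a h)) := by
  simp only [twistedWronskian, wronskian, derivative_mul, derivative_sub, derivative_X,
    derivative_C, eval_add, eval_mul, eval_sub, eval_X, eval_C, eval_one, eval_zero]
  ring

theorem eval_derivative_twistedWronskian_X_sub_C_mul_left {R : Type*} [CommRing R] (α a : R)
    (g h : R[X]) :
    eval a (derivative (twistedWronskian α ((X - C a) * g) h)) =
      ((α - 1) * eval a g - 2 * a * eval a (derivative g)) * eval a h := by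
  simp only [twistedWronskian, wronskian, derivative_mul, derivative_add, derivative_sub,
    derivative_X, derivative_C, derivative_one, derivative_zero, eval_add, eval_mul, eval_sub,
    eval_X, eval_C, eval_one, eval_zero]
  ring

variable {K I J : Type*} [Field K] [Fintype I] [DecidableEq I] [Fintype J] {α β : K} {t : I → K}
  {tt : J → K}

theorem ne_zero_and_sum_eq_of_twistedWronskian_eq {L : Type*} [Fintype L] {ζ : L → K}
    (hβ : β ≠ 0) (ht : Function.Injective t) (htζ : ∀ i c, t i ≠ ζ c)
    (hW : twistedWronskian α (nodal univ t) (nodal univ tt) = C β * nodal univ ζ) (i : I) :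
    t i ≠ 0 ∧ (α - 1) * (t i)⁻¹ + ∑ c, (t i - ζ c)⁻¹ =
      ∑ j ∈ univ.erase i, 2 * (t i - t j)⁻¹ := by
  rw [nodal_eq_mul_nodal_erase (mem_univ i)] at hW
  have value := congrArg (eval (t i)) hW
  have slope := congrArg (fun p => eval (t i) (derivative p)) hW
  simp only [eval_twistedWronskian_X_sub_C_mul_left, eval_mul, eval_C] at value
  simp only [eval_derivative_twistedWronskian_X_sub_C_mul_left, derivative_C_mul, eval_mul, eval_C,
    eval_derivative_nodal fun c _ => htζ i c,
    eval_derivative_nodal fun _ hj => ht.ne (ne_of_mem_erase hj).symm] at slope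
  have value_ne := mul_ne_zero hβ (eval_nodal_not_at_node fun c (_ : c ∈ univ) => htζ i c)
  rw [← value, neg_ne_zero, mul_ne_zero_iff] at value_ne
  obtain ⟨ti_ne, prod_ne⟩ := value_ne
  refine ⟨ti_ne, mul_left_cancel₀ (mul_ne_zero ti_ne prod_ne) ?_⟩
  rw [← mul_sum]
  linear_combination slope - (∑ c, (t i - ζ c)⁻¹) * value +
    (α - 1) * (eval (t i) (nodal (univ.erase i) t) * eval (t i) (nodal univ tt)) *
      mul_inv_cancel₀ ti_ne

theorem isBetheSolution_of_twistedWronskian_eq {L S : Type*} [Fintype L] [Fintype S] {z : S → K}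
    {f : L → S} (hβ : β ≠ 0) (ht : Function.Injective t) (htz : ∀ i s, t i ≠ z s)
    (hW : twistedWronskian α (nodal univ t) (nodal univ tt) = C β * nodal univ (z ∘ f)) :
    IsBetheSolution (Option.elim' (α - 1) fun s => (colourCount f s : K)) (Option.elim' 0 z) t := by
  have equations := ne_zero_and_sum_eq_of_twistedWronskian_eq hβ ht (fun i c => htz i (f c)) hW
  refine ⟨ht, fun i => Option.rec (equations i).1 (htz i), fun i => ?_⟩
  rw [← (equations i).2, Fintype.sum_option]
  simp only [Option.elim'_none, Option.elim'_some, sub_zero, add_right_inj]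
  classical
  simp only [colourCount, Finsupp.finsetSum_apply, Finsupp.single_apply, Nat.cast_sum, sum_mul,
    Nat.cast_ite, Nat.cast_one, Nat.cast_zero, ite_mul, one_mul, zero_mul]
  rw [sum_comm]
  simp only [sum_ite_eq, mem_univ, if_true]

end BetheEquationsFromWronskian

section Duality

open Polynomial Lagrange

theorem exists_smul_eq_of_mul_comm {ι K : Type*} [Field K] {u v : ι → K}
    (h : ∀ i j, u i * v j = u j * v i) (hu : u ≠ 0) (hv : v ≠ 0) : ∃ c : K, c ≠ 0 ∧ u = c • v := by
  obtain ⟨j, hj⟩ := Function.ne_iff.1 hv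
  have hj : v j ≠ 0 := hj
  have eq_smul : u = (u j / v j) • v := funext fun i => by
    rw [Pi.smul_apply, smul_eq_mul, div_mul_eq_mul_div, ← h, mul_div_cancel_right₀ _ hj]
  exact ⟨u j / v j, fun h0 => hu (by rw [eq_smul, h0, zero_smul]), eq_smul⟩

theorem permanent_mul_permanent_comm_of_colourings {I J S : Type*} [Fintype I] [Fintype J]
    [DecidableEq I] [DecidableEq J] [Fintype S] {α β : ℂ} {z : S → ℂ} {t : I → ℂ} {tt : J → ℂ}
    (hβ : β ≠ 0) (hz0 : ∀ s, z s ≠ 0) (ht : Function.Injective t) (htt : Function.Injective tt)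
    (htz : ∀ i s, t i ≠ z s) (httz : ∀ j s, tt j ≠ z s) {f f₀ : I → S} {g g₀ : J → S}
    (hfg : colourCount f + colourCount g = colourCount f₀ + colourCount g₀)
    (hW : twistedWronskian α (nodal univ t) (nodal univ tt) =
      C β * ∏ s, (X - C (z s)) ^ (colourCount f₀ + colourCount g₀) s) :
    (cauchyMatrix t (z ∘ f)).permanent * (∏ i, z (f i)) * (cauchyMatrix tt (z ∘ g₀)).permanent =
      (cauchyMatrix t (z ∘ f₀)).permanent * (∏ i, z (f₀ i)) *
        (cauchyMatrix tt (z ∘ g)).permanent := by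
  rw [← colourCount_sumElim, ← colourCount_sumElim] at hfg
  rw [← colourCount_sumElim, ← nodal_univ_comp] at hW
  obtain ⟨π, hπ⟩ := exists_perm_of_colourCount_eq hfg
  have swap := permanent_mul_permanent_swap (ζ := z ∘ Sum.elim f₀ g₀) hβ (fun c => hz0 _) ht htt
    (fun i c => htz i _) (fun j c => httz j _) hW π 1
  have on_left : f = Sum.elim f₀ g₀ ∘ π ∘ Sum.inl := congrArg (· ∘ Sum.inl) hπ
  have on_right : g = Sum.elim f₀ g₀ ∘ π ∘ Sum.inr := congrArg (· ∘ Sum.inr) hπ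
  rw [on_left, on_right]
  exact swap

variable {m}

theorem exponent_add_exponent_rev (l : Idx m) (s : Fin n) :
    exponent l s + exponent (m := m) (fun s => (l s).rev) s = m s := by
  have := (l s).is_le
  simp only [exponent_apply, Fin.val_rev]
  omega

theorem sum_val_add_sum_val_rev (l : Idx m) :
    ∑ s, (l s : ℕ) + ∑ s, ((l s).rev : ℕ) = ∑ s, m s := by
  rw [← sum_add_distrib]
  exact sum_congr rfl fun s _ => exponent_add_exponent_rev l s

theorem sigmaOp_of_weight {k : ℕ} {v : TV m} (hv : ∀ l, ∑ s, (l s : ℕ) ≠ k → v l = 0) :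
    sigmaOp m v = (-1 : ℂ) ^ k • fun l => v fun s => (l s).rev := by
  funext l
  simp only [sigmaOp, mulShift, LinearMap.coe_mk, AddHom.coe_mk, Pi.smul_apply, smul_eq_mul]
  by_cases hl : ∑ s, ((l s).rev : ℕ) = k
  · rw [prod_pow_eq_pow_sum, ← hl]
    congr 2
    exact sum_congr rfl fun s _ => by rw [Fin.val_rev]; omega
  · rw [hv _ hl, mul_zero, mul_zero]

theorem exists_colourCount_eq_exponent {l : Idx m} {k : ℕ} (hl : ∑ s, (l s : ℕ) = k) :
    ∃ f : Fin k → Fin n, colourCount f = exponent l := by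
  subst hl
  exact ⟨blockColouring l, colourCount_blockColouring l⟩

variable {z : Fin n → ℂ} {m' b : ℕ} {t : Fin m' → ℂ} {tt : Fin b → ℂ} {α β lam : ℂ}

theorem isBetheSolution_of_twistedWronskian_eq_prod (hβ : β ≠ 0) (ht : Function.Injective t)
    (htz : ∀ i s, t i ≠ z s) (hW : twistedWronskian α (nodal univ t) (nodal univ tt) =
      C β * ∏ s, (X - C (z s)) ^ m s) :
    IsBetheSolution (Option.elim' (α - 1) fun s => (m s : ℂ)) (Option.elim' 0 z) t := by
  have content := colourCount_blockColouring (m := m) fun s => Fin.last (m s)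
  have bethe := isBetheSolution_of_twistedWronskian_eq hβ ht htz
    (hW.trans (congrArg (C β * ·) ((nodal_univ_comp z _).trans (by rw [content]; rfl)).symm))
  rwa [content] at bethe

theorem pOp_betheVec_ne_zero
    (h : IsBetheSolution (Option.elim' lam fun s => (m s : ℂ)) (Option.elim' 0 z) t)
    (hlam : ∀ k : ℕ, lam ≠ k) (hm' : m' ≤ ∑ s, m s) (hz0 : ∀ s, z s ≠ 0) :
    pOp m (lam + ((∑ s, m s : ℕ) - 2 * (m' : ℂ))) (betheVec m z t) ≠ 0 := by
  obtain ⟨l, hl⟩ := Function.ne_iff.1 (betheVec_ne_zero h hlam)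
  obtain ⟨f, hf⟩ := exists_colourCount_eq_exponent
    (not_imp_comm.1 (betheVec_apply_eq_zero z t) hl)
  refine Function.ne_iff.2 ⟨l, ?_⟩
  rw [pOp_betheVec_apply h hlam hm' hf]
  exact mul_ne_zero (prod_ne_zero_iff.2 fun i _ => inv_ne_zero (h.ne i none))
    (mul_ne_zero hl (prod_ne_zero_iff.2 fun i _ => hz0 _))

theorem pOp_betheVec_mul_betheVec_rev_comm_of_weight (hz0 : ∀ s, z s ≠ 0)
    (hb : m' + b = ∑ s, m s) (hα : ∀ k : ℕ, α - 1 ≠ k) (hβ : β ≠ 0) (ht : Function.Injective t)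
    (htt : Function.Injective tt) (htz : ∀ i s, t i ≠ z s) (httz : ∀ j s, tt j ≠ z s)
    (hW : twistedWronskian α (nodal univ t) (nodal univ tt) = C β * ∏ s, (X - C (z s)) ^ m s)
    {l l₀ : Idx m} (hl : ∑ s, (l s : ℕ) = m') (hl₀ : ∑ s, (l₀ s : ℕ) = m') :
    pOp m (α - 1 + ((∑ s, m s : ℕ) - 2 * (m' : ℂ))) (betheVec m z t) l *
        betheVec m z tt (fun s => (l₀ s).rev) =
      pOp m (α - 1 + ((∑ s, m s : ℕ) - 2 * (m' : ℂ))) (betheVec m z t) l₀ *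
        betheVec m z tt (fun s => (l s).rev) := by
  have bethe := isBetheSolution_of_twistedWronskian_eq_prod hβ ht htz hW
  have hm' : m' ≤ ∑ s, m s := by omega
  have sum_rev {l : Idx m} (hl : ∑ s, (l s : ℕ) = m') : ∑ s, ((l s).rev : ℕ) = b := by
    have := sum_val_add_sum_val_rev l
    omega
  obtain ⟨f, hf⟩ := exists_colourCount_eq_exponent hl
  obtain ⟨f₀, hf₀⟩ := exists_colourCount_eq_exponent hl₀
  obtain ⟨g, hg⟩ := exists_colourCount_eq_exponent (sum_rev hl)
  obtain ⟨g₀, hg₀⟩ := exists_colourCount_eq_exponent (sum_rev hl₀)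
  have content₀ (s : Fin n) : (colourCount f₀ + colourCount g₀) s = m s := by
    rw [hf₀, hg₀]
    exact exponent_add_exponent_rev l₀ s
  have content : colourCount f + colourCount g = colourCount f₀ + colourCount g₀ := by
    ext s
    rw [content₀, hf, hg]
    exact exponent_add_exponent_rev l s
  have comm := permanent_mul_permanent_comm_of_colourings hβ hz0 ht htt htz httz content
    (by simpa only [content₀] using hW)
  rw [pOp_betheVec_apply bethe hα hm' hf, pOp_betheVec_apply bethe hα hm' hf₀,
    betheVec_apply_eq_permanent z t hf, betheVec_apply_eq_permanent z t hf₀,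
    betheVec_apply_eq_permanent z tt hg, betheVec_apply_eq_permanent z tt hg₀]
  linear_combination (∏ i, (t i)⁻¹) * comm

theorem pOp_betheVec_mul_betheVec_rev_comm (hz0 : ∀ s, z s ≠ 0) (hb : m' + b = ∑ s, m s)
    (hα : ∀ k : ℕ, α - 1 ≠ k) (hβ : β ≠ 0) (ht : Function.Injective t)
    (htt : Function.Injective tt) (htz : ∀ i s, t i ≠ z s) (httz : ∀ j s, tt j ≠ z s)
    (hW : twistedWronskian α (nodal univ t) (nodal univ tt) = C β * ∏ s, (X - C (z s)) ^ m s)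
    (l l₀ : Idx m) :
    pOp m (α - 1 + ((∑ s, m s : ℕ) - 2 * (m' : ℂ))) (betheVec m z t) l *
        betheVec m z tt (fun s => (l₀ s).rev) =
      pOp m (α - 1 + ((∑ s, m s : ℕ) - 2 * (m' : ℂ))) (betheVec m z t) l₀ *
        betheVec m z tt (fun s => (l s).rev) := by
  have eq_zero (l : Idx m) (hl : ∑ s, (l s : ℕ) ≠ m') :
      pOp m (α - 1 + ((∑ s, m s : ℕ) - 2 * (m' : ℂ))) (betheVec m z t) l = 0 ∧
        betheVec m z tt (fun s => (l s).rev) = 0 := by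
    have := sum_val_add_sum_val_rev l
    exact ⟨pOp_betheVec_apply_eq_zero
      (isBetheSolution_of_twistedWronskian_eq_prod hβ ht htz hW) hα (by omega) hl,
      betheVec_apply_eq_zero z tt (by omega)⟩
  by_cases hl : ∑ s, (l s : ℕ) = m'
  · by_cases hl₀ : ∑ s, (l₀ s : ℕ) = m'
    · exact pOp_betheVec_mul_betheVec_rev_comm_of_weight hz0 hb hα hβ ht htt htz httz hW hl hl₀
    · rw [(eq_zero l₀ hl₀).1, (eq_zero l₀ hl₀).2, zero_mul, mul_zero]
  · rw [(eq_zero l hl).1, (eq_zero l hl).2, zero_mul, mul_zero]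

theorem exists_Aop_betheVec_eq_smul (hz0 : ∀ s, z s ≠ 0) (hb : m' + b = ∑ s, m s)
    (hα : ∀ k : ℤ, α ≠ k) (hβ : β ≠ 0) (ht : Function.Injective t)
    (htt : Function.Injective tt) (htz : ∀ i s, t i ≠ z s) (httz : ∀ j s, tt j ≠ z s)
    (hW : twistedWronskian α (nodal univ t) (nodal univ tt) = C β * ∏ s, (X - C (z s)) ^ m s) :
    ∃ c : ℂ, c ≠ 0 ∧
      Aop m (α - 1 + ((∑ s, m s : ℕ) - 2 * (m' : ℂ))) (betheVec m z t) = c • betheVec m z tt := by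
  have bethe := isBetheSolution_of_twistedWronskian_eq_prod hβ ht htz hW
  have hW' : twistedWronskian (-α) (nodal univ tt) (nodal univ t) =
      C (-β) * ∏ s, (X - C (z s)) ^ m s := by
    rw [twistedWronskian_swap, hW, C_neg, neg_mul]
  have bethe' := isBetheSolution_of_twistedWronskian_eq_prod (neg_ne_zero.2 hβ) htt httz hW'
  have hα₁ (k : ℕ) : α - 1 ≠ k := fun h => hα (k + 1) (by push_cast; linear_combination h)
  have hα₂ (k : ℕ) : -α - 1 ≠ k := fun h => hα (-(k + 1)) (by push_cast; linear_combination -h)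
  have hm' : m' ≤ ∑ s, m s := by omega
  have rev_rev (l : Idx m) : (fun s => (l s).rev.rev) = l := funext fun s => Fin.rev_rev (l s)
  have pOp_ne := pOp_betheVec_ne_zero bethe hα₁ hm' hz0
  have comm := pOp_betheVec_mul_betheVec_rev_comm hz0 hb hα₁ hβ ht htt htz httz hW
  have pOp_weight := fun l hl => pOp_betheVec_apply_eq_zero bethe hα₁ hm' (l := l) hl
  set u := pOp m (α - 1 + ((∑ s, m s : ℕ) - 2 * (m' : ℂ))) (betheVec m z t)
  have rev_eq_zero (h : (fun l : Idx m => u fun s => (l s).rev) = 0) : u = 0 := by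
    ext l
    simpa only [rev_rev, Pi.zero_apply] using congrFun h fun s => (l s).rev
  obtain ⟨c, hc, hu⟩ := exists_smul_eq_of_mul_comm (u := fun l : Idx m => u fun s => (l s).rev)
    (v := betheVec m z tt)
    (fun l l₀ => by simpa only [rev_rev] using comm (fun s => (l s).rev) fun s => (l₀ s).rev)
    (fun h => pOp_ne (rev_eq_zero h))
    (betheVec_ne_zero bethe' hα₂)
  refine ⟨(-1) ^ m' * c, mul_ne_zero (pow_ne_zero _ (neg_ne_zero.2 one_ne_zero)) hc, ?_⟩
  rw [Aop, Module.End.mul_apply, sigmaOp_of_weight pOp_weight, hu, smul_smul]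

end Duality

open Polynomial in
theorem statement13_general
    (n : ℕ) (m : Fin n → ℕ) (M : ℕ) (hM : M = ∑ s, m s) (z : Fin n → ℂ) (hz0 : ∀ s, z s ≠ 0)
    (μ : ℂ) (hμ : ∀ k : ℤ, μ ≠ (M : ℂ) / 2 + (k : ℂ))
    (m' : ℕ) (hm' : m' ≤ M) (ν : ℂ) (hν : ν = (M : ℂ) - 2 * (m' : ℂ))
    (t : Fin m' → ℂ) (ht : Function.Injective t) (htz : ∀ i s, t i ≠ z s)
    (tt : Fin (M - m') → ℂ) (htt : Function.Injective tt) (httz : ∀ i s, tt i ≠ z s)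
    (hW : C (μ - ν / 2) * ((∏ i, (X - C (t i))) * ∏ i, (X - C (tt i)))
          + X * ((∏ i, (X - C (t i))) * derivative (∏ i, (X - C (tt i)))
              - derivative (∏ i, (X - C (t i))) * ∏ i, (X - C (tt i)))
        = C (μ + ν / 2) * ∏ s, (X - C (z s)) ^ (m s)) :
    ∃ c : ℂ, c ≠ 0 ∧
      Aop m (μ + ν / 2 - 1) (betheVec m z t) = c • betheVec m z tt := by
  have hα (k : ℤ) : μ - ν / 2 ≠ k := fun h => hμ (k - m') <| by
    push_cast
    linear_combination h + hν / 2
  have hβ : μ + ν / 2 ≠ 0 := fun h => hμ (m' - M) <| by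
    push_cast
    linear_combination h - hν / 2
  have hκ : μ + ν / 2 - 1 = μ - ν / 2 - 1 + ((∑ s, m s : ℕ) - 2 * (m' : ℂ)) := by
    rw [← hM]
    linear_combination hν
  rw [hκ]
  exact exists_Aop_betheVec_eq_smul hz0 (by omega) hα hβ ht htt htz httz hW

open Polynomial in
/-- Theorem 7.5 of the paper; Theorem 5.7 of [MV2].  Assume `μ ∉ M/2 + ℤ`,
`ν = M - 2m'`.  Let `t⁰` solve the Bethe ansatz equations for `(z; μ; V[ν])` and let
`ỹ(X) = Π_i (X - t̃⁰_i)` be the monic polynomial of degree `M - m'` satisfying the Wronskian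
identity; assume the `t̃⁰_i` are pairwise distinct and `ỹ(z_s) ≠ 0`.  Then
`𝒜(μ + ν/2 - 1) ω(t⁰, z) = c ω(t̃⁰, z)` for some nonzero constant `c`. -/
theorem statement13
    (n : ℕ) (hn : 1 < n) (m : Fin n → ℕ) (hm : ∀ s, 0 < m s)
    (M : ℕ) (hM : M = ∑ s, m s)
    (z : Fin n → ℂ) (hz0 : ∀ s, z s ≠ 0) (hz : Function.Injective z)
    (μ : ℂ) (hμ : ∀ k : ℤ, μ ≠ (M : ℂ) / 2 + (k : ℂ))
    (m' : ℕ) (hm' : m' ≤ M) (ν : ℂ) (hν : ν = (M : ℂ) - 2 * (m' : ℂ))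
    (t : Fin m' → ℂ) (ht : BAE m z μ t)
    (tt : Fin (M - m') → ℂ) (httinj : Function.Injective tt)
    (httz : ∀ i s, tt i ≠ z s)
    (hid : C (μ - ν / 2) * ((∏ i, (X - C (t i))) * ∏ i, (X - C (tt i)))
          + X * ((∏ i, (X - C (t i))) * derivative (∏ i, (X - C (tt i)))
              - derivative (∏ i, (X - C (t i))) * ∏ i, (X - C (tt i)))
        = C (μ + ν / 2) * ∏ s, (X - C (z s)) ^ (m s)) :
    ∃ c : ℂ, c ≠ 0 ∧
      Aop m (μ + ν / 2 - 1) (betheVec m z t) = c • betheVec m z tt := by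
  exact statement13_general n m M hM z hz0 μ hμ m' hm' ν hν t ht.1 ht.2.2.1 tt httinj httz hid

end
end Paper
end
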